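/- arXiv:2201.01516 — 2 statements merged into one kernel-verified Lean document; each statement's English description precedes it below -/
import Mathlib

section
/- For every non-negative real number a ≥ 0 and every integer m ≥ 1, the sum over all tuples (l₁,…,l_m) of non-negative integers satisfying l₁ + 2l₂ + ⋯ + m·l_m = m of a^{l₁+⋯+l_m} / (1^{l₁} l₁! · 2^{l₂} l₂! ⋯ m^{l_m} l_m!) equals (1/m!) ∏_{j=0}^{m−1} (a + j). -/
/-!
Write `w(l) = ∏ᵢ a^{lᵢ} / (i^{lᵢ} lᵢ!)` and let `S(n)` be the sum of `w` over the tuples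
`l` of weight `∑ i lᵢ = n`. Since `i lᵢ w(l) = a w(l - eᵢ)`, multiplying by the weight and shifting
the `i`-th coordinate (`sum_mul_tupleTerm`) gives the recurrence `n S(n) = a ∑_{j < n} S(j)`.
This determines `S` from `S(0) = 1`, and the numbers `a(a+1)⋯(a+n-1)/n!` satisfy the same
recurrence (`mul_risingCoeff`). The number `N` of coordinates is kept fixed while `n ≤ N` varies,
so that the induction on `n` does not change the type of the tuples.
-/

noncomputable section

/-- The tuples `(l₁, …, l_N)` with `l₁ + 2 l₂ + ⋯ + N l_N = n`; the coordinate `lᵢ₊₁` is `l i`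
for `i : Fin N`. The bound `l i ≤ N` makes the set finite and is automatic when `n ≤ N`. -/
def weightTuples (N n : ℕ) : Finset (Fin N → ℕ) :=
  (Fintype.piFinset fun _ : Fin N => Finset.range (N + 1)).filter
    (fun l => ∑ i : Fin N, ((i : ℕ) + 1) * l i = n)

/-- The summand `a^{l₁+⋯+l_N} / (1^{l₁} l₁! ⋯ N^{l_N} l_N!)`, as a product over coordinates. -/
def tupleTerm (a : ℝ) {N : ℕ} (l : Fin N → ℕ) : ℝ :=
  ∏ i : Fin N, a ^ l i / (((i : ℕ) + 1 : ℝ) ^ (l i) * (Nat.factorial (l i) : ℝ))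

/-- The rising factorial `a(a+1)⋯(a+n-1)` divided by `n!`. -/
def risingCoeff (a : ℝ) (n : ℕ) : ℝ :=
  (1 / (Nat.factorial n : ℝ)) * ∏ j ∈ Finset.range n, (a + (j : ℝ))

lemma mem_weightTuples {N n : ℕ} (h : n ≤ N) (l : Fin N → ℕ) :
    l ∈ weightTuples N n ↔ ∑ i : Fin N, ((i : ℕ) + 1) * l i = n := by
  simp only [weightTuples, Finset.mem_filter, Fintype.mem_piFinset, Finset.mem_range,
    and_iff_right_iff_imp]
  intro hl i
  have h1 := Finset.single_le_sum (f := fun i : Fin N => ((i : ℕ) + 1) * l i)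
    (fun _ _ => Nat.zero_le _) (Finset.mem_univ i)
  have h2 : l i ≤ ((i : ℕ) + 1) * l i := Nat.le_mul_of_pos_left _ (Nat.succ_pos _)
  omega

lemma weight_add_single {N : ℕ} (l : Fin N → ℕ) (i : Fin N) :
    ∑ j : Fin N, ((j : ℕ) + 1) * (l + Pi.single i 1 : Fin N → ℕ) j
      = ∑ j : Fin N, ((j : ℕ) + 1) * l j + (i + 1) := by
  simp [mul_add, Finset.sum_add_distrib, Pi.single_apply]

lemma mul_tupleTerm_add_single (a : ℝ) {N : ℕ} (l : Fin N → ℕ) (i : Fin N) :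
    ((i : ℕ) + 1 : ℝ) * ((l + Pi.single i 1 : Fin N → ℕ) i : ℕ) * tupleTerm a (l + Pi.single i 1)
      = a * tupleTerm a l := by
  unfold tupleTerm
  rw [← Finset.mul_prod_erase _ _ (Finset.mem_univ i),
    ← Finset.mul_prod_erase Finset.univ
      (fun j : Fin N => a ^ l j / (((j : ℕ) + 1 : ℝ) ^ (l j) * (Nat.factorial (l j) : ℝ)))
      (Finset.mem_univ i), ← mul_assoc, ← mul_assoc]
  congr 1
  · have h1 : ((i : ℕ) + 1 : ℝ) ≠ 0 := by positivity
    have h2 : (Nat.factorial (l i) : ℝ) ≠ 0 := by positivity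
    have h3 : ((l i : ℝ) + 1) ≠ 0 := by positivity
    simp only [Pi.add_apply, Pi.single_eq_same, Nat.factorial_succ]
    push_cast
    field_simp
    ring
  · refine Finset.prod_congr rfl fun j hj => ?_
    simp [Pi.single_eq_of_ne (Finset.ne_of_mem_erase hj)]

/-- Tuples with `l i = 0` contribute nothing to the left-hand side, and the others are the
`l + eᵢ` with `l` of weight smaller by `i + 1`. -/
lemma sum_mul_tupleTerm (a : ℝ) {N k : ℕ} (i : Fin N) (h : k + (i + 1) ≤ N) :
    ∑ l ∈ weightTuples N (k + (i + 1)), ((i : ℕ) + 1 : ℝ) * (l i : ℕ) * tupleTerm a l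
      = a * ∑ l ∈ weightTuples N k, tupleTerm a l := by
  rw [Finset.mul_sum]
  symm
  refine Finset.sum_of_injOn (fun l : Fin N → ℕ => l + Pi.single i 1) ?_ ?_ ?_ ?_
  · intro l _ l' _ hl
    exact add_right_cancel hl
  · intro l hl
    simp only [Finset.mem_coe] at hl ⊢
    rw [mem_weightTuples (by omega)] at hl
    rw [mem_weightTuples h, weight_add_single, hl]
  · intro l hl hl'
    -- A tuple outside the image of the shift has `l i = 0`.
    have h0 : l i = 0 := by
      by_contra h0
      apply hl'
      have hs : l - Pi.single i 1 + Pi.single i 1 = l := by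
        funext j
        by_cases hj : j = i
        · subst hj
          simp only [Pi.add_apply, Pi.sub_apply, Pi.single_eq_same]
          omega
        · simp [Pi.single_eq_of_ne hj]
      refine ⟨l - Pi.single i 1, ?_, hs⟩
      rw [mem_weightTuples h, ← hs, weight_add_single] at hl
      rw [Finset.mem_coe, mem_weightTuples (by omega)]
      omega
    simp [h0]
  · intro l _
    exact (mul_tupleTerm_add_single a l i).symm

lemma sum_mul_tupleTerm_of_lt (a : ℝ) {N n : ℕ} (hn : n ≤ N) (i : Fin N) (h : n < i + 1) :
    ∑ l ∈ weightTuples N n, ((i : ℕ) + 1 : ℝ) * (l i : ℕ) * tupleTerm a l = 0 := by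
  refine Finset.sum_eq_zero fun l hl => ?_
  rw [mem_weightTuples hn] at hl
  have h1 := Finset.single_le_sum (f := fun i : Fin N => ((i : ℕ) + 1) * l i)
    (fun _ _ => Nat.zero_le _) (Finset.mem_univ i)
  have h0 : l i = 0 := by
    by_contra h0
    have := Nat.le_mul_of_pos_right ((i : ℕ) + 1) (Nat.pos_of_ne_zero h0)
    omega
  simp [h0]

/-- The recurrence `n S(n) = a ∑_{j < n} S(j)`. -/
lemma mul_sum_tupleTerm (a : ℝ) {N n : ℕ} (hn : n ≤ N) :
    (n : ℝ) * ∑ l ∈ weightTuples N n, tupleTerm a l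
      = a * ∑ j ∈ Finset.range n, ∑ l ∈ weightTuples N j, tupleTerm a l := by
  have h1 : (n : ℝ) * ∑ l ∈ weightTuples N n, tupleTerm a l
      = ∑ i : Fin N, ∑ l ∈ weightTuples N n,
          ((i : ℕ) + 1 : ℝ) * (l i : ℕ) * tupleTerm a l := by
    rw [Finset.sum_comm, Finset.mul_sum]
    refine Finset.sum_congr rfl fun l hl => ?_
    rw [mem_weightTuples hn] at hl
    rw [← Finset.sum_mul, ← hl]
    push_cast
    rfl
  have h2 : ∀ i : Fin N, ∑ l ∈ weightTuples N n,
        ((i : ℕ) + 1 : ℝ) * (l i : ℕ) * tupleTerm a l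
      = (fun i : ℕ => if i < n then a * ∑ l ∈ weightTuples N (n - 1 - i), tupleTerm a l else 0)
          i := by
    intro i
    by_cases hi : (i : ℕ) < n
    · obtain ⟨k, rfl⟩ : ∃ k, n = k + (i + 1) := ⟨n - (i + 1), by omega⟩
      rw [sum_mul_tupleTerm a i hn]
      simp only [hi, if_true]
      congr 3
      omega
    · simp only [hi, if_false]
      exact sum_mul_tupleTerm_of_lt a hn i (by omega)
  rw [h1, Finset.sum_congr rfl fun i _ => h2 i, Fin.sum_univ_eq_sum_range
      (fun i => if i < n then a * ∑ l ∈ weightTuples N (n - 1 - i), tupleTerm a l else 0), ← Finset.sum_filter,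
    ← Finset.mul_sum]
  have h3 : (Finset.range N).filter (· < n) = Finset.range n := by
    ext x
    simp only [Finset.mem_filter, Finset.mem_range]
    omega
  rw [h3, Finset.sum_range_reflect (fun j => ∑ l ∈ weightTuples N j, tupleTerm a l)]

lemma succ_mul_risingCoeff (a : ℝ) (n : ℕ) :
    ((n + 1 : ℕ) : ℝ) * risingCoeff a (n + 1) = (a + n) * risingCoeff a n := by
  have h2 : (Nat.factorial n : ℝ) ≠ 0 := by positivity
  have h3 : ((n : ℝ) + 1) ≠ 0 := by positivity
  unfold risingCoeff
  rw [Finset.prod_range_succ, Nat.factorial_succ]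
  push_cast
  field_simp

/-- The recurrence of `mul_sum_tupleTerm`, for the rising factorial divided by `n!`. -/
lemma mul_risingCoeff (a : ℝ) (n : ℕ) :
    (n : ℝ) * risingCoeff a n = a * ∑ j ∈ Finset.range n, risingCoeff a j := by
  induction n with
  | zero => simp
  | succ n ih =>
    rw [succ_mul_risingCoeff, Finset.sum_range_succ, mul_add, ← ih]
    ring

lemma sum_tupleTerm (a : ℝ) {N n : ℕ} (hn : n ≤ N) :
    ∑ l ∈ weightTuples N n, tupleTerm a l = risingCoeff a n := by
  induction n using Nat.strong_induction_on with
  | _ n ih =>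
    rcases Nat.eq_zero_or_pos n with rfl | hpos
    · have h0 : weightTuples N 0 = {0} := by
        ext l
        rw [mem_weightTuples hn]
        simp [funext_iff]
      simp [h0, tupleTerm, risingCoeff]
    · have hne : (n : ℝ) ≠ 0 := by positivity
      apply mul_left_cancel₀ hne
      rw [mul_sum_tupleTerm a hn, mul_risingCoeff]
      congr 1
      refine Finset.sum_congr rfl fun j hj => ?_
      have hj := Finset.mem_range.mp hj
      exact ih j hj (by omega)

/-- Lemma 5.2: for every `a ≥ 0` and `m ≥ 1`, the sum over all tuples
`(l₁,…,l_m)` of non-negative integers with `l₁ + 2l₂ + ⋯ + m·l_m = m` of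
`a^{l₁+⋯+l_m} / (1^{l₁} l₁! ⋯ m^{l_m} l_m!)` equals `(1/m!) ∏_{j=0}^{m-1} (a+j)`.
(Any such tuple has all entries `≤ m`, so the sum may be taken over `{0,…,m}^m`.) -/
theorem faa_di_bruno_partition_sum (a : ℝ) (ha : 0 ≤ a) (m : ℕ) (hm : 1 ≤ m) :
    ∑ l ∈ (Fintype.piFinset fun _ : Fin m => Finset.range (m + 1)).filter
        (fun l => ∑ i : Fin m, ((i : ℕ) + 1) * l i = m),
      a ^ (∑ i : Fin m, l i) /
        ∏ i : Fin m, (((i : ℕ) + 1 : ℝ) ^ (l i) * (Nat.factorial (l i) : ℝ))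
      = (1 / (Nat.factorial m : ℝ)) * ∏ j ∈ Finset.range m, (a + (j : ℝ)) := by
  refine Eq.trans (Finset.sum_congr rfl fun l _ => ?_) (sum_tupleTerm a (le_refl m))
  rw [tupleTerm, Finset.prod_div_distrib, Finset.prod_pow_eq_pow_sum]
end
end

section
/- Let A, B ≥ 1, let n ≥ 1 be a dimension, let 0 < t ≤ 1, 0 < s < 1 and 0 < γ ≤ 1, and let E ⊂ (−1,1) × B(0,1) ⊂ ℝ^{n+1} be a measurable set with Leb(E) ≥ 2γ V₁, where V₁ is the Lebesgue volume of the unit ball in ℝⁿ. Then there exists a constant K_{s,n} ≥ 1, depending only on s and n, such that for every f ∈ C^∞((−1,1) × B(0,1)) satisfying ‖f‖_{L^∞((−1,1)×B(0,1))} ≥ t and ‖∂_u^m ∂_x^α f‖_{L^∞((−1,1)×B(0,1))} ≤ A^m B^{|α|} m! (|α|!)^s for all m ∈ ℕ and α ∈ ℕⁿ, one has ‖f‖²_{L²((−1,1)×B(0,1))} ≤ (K_{s,n}/γ)^{K_{s,n}((1−log t) e^{K_{s,n} A} + B^{1/(1−s)})} ‖f‖²_{L²(E)}. -/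
/-! Why the estimate holds.

*Remez-type inequality on a segment.* Let `h` be smooth on `[0, 1]` with `|h^(k)| ≤ k! L 4^(-k)` and
`|h 0| ≥ a`. If `|h| ≤ ε` on a set of measure `δ`, choose `N + 1` points of that set separated by
about `δ / N`. The divided difference of `h` at these points and `0` is a value of
`h^(N+1) / (N+1)!` by iterated Rolle, so `a ≤ |h 0| ≤ ε (C/δ)^N + L 4^(-N-1)`. With
`N ≈ log (L / a)` this gives `ε ≥ (δ / 12)^(3 + 2 log (L / a))` (`UCC.remez`, and
`UCC.remez_segment` for a complex function along a segment). The
constant `L` enters only through its logarithm.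

*Growth.* Since `(l B)^j / (j!)^(1-s) ≤ exp ((1-s) (l B)^(1/(1-s)))`, the derivatives of `f` along a
vector `v = (v₀, w)` satisfy the hypothesis with `L = exp (c B^(1/(1-s)))` as soon as `|v₀| A` is
small; there is no smallness condition on `w` (`UCC.dirD_bound`).

*Localisation.* A point `(u₀, x₀)` carries `‖f‖ ≥ t / e`. Cut the cylinder into `J ≈ 16 A` slabs in
`u`; one of them contains its share of `E`. At fixed `x₀`, where only `∂_u` matters and `L` may be
taken to be `e`, the inequality carries the lower bound through `O(A)` steps of length about `1 / A`
into that slab, each step multiplying the logarithm by `8` (`UCC.chain`); this is the origin of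
`(1 - log t) e^(K A)`. Inside the slab a single application of the inequality suffices, along a
segment from the point just found which meets the set of small values in a large proportion. The
segment exists by averaging homotheties (`UCC.exists_segment`). This application costs
`L = exp (c B^(1/(1-s)))` only once, so that `B^(1/(1-s))` enters additively. Hence `‖f‖ ≥ ε` on half
of the share of `E` (`UCC.good_part`), and `‖f‖ ≤ 1` on the cylinder gives the claim. -/

open MeasureTheory Matrix Metric Set Filter
open scoped ENNReal Topology

noncomputable section

/-- The first-order partial derivative `∂_{x_i} f`. -/
def pd {n : ℕ} (i : Fin n) (f : EuclideanSpace ℝ (Fin n) → ℂ)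
    (x : EuclideanSpace ℝ (Fin n)) : ℂ :=
  fderiv ℝ f x (EuclideanSpace.single i 1)

/-- The iterated partial derivative `∂_{x_i}^m f`. -/
def pdIter {n : ℕ} (i : Fin n) :
    ℕ → (EuclideanSpace ℝ (Fin n) → ℂ) → EuclideanSpace ℝ (Fin n) → ℂ
  | 0, f => f
  | m + 1, f => pd i (pdIter i m f)

/-- The partial derivative `∂_x^α f` for a multi-index `α ∈ ℕⁿ`. -/
def pdMulti {n : ℕ} (α : Fin n → ℕ) (f : EuclideanSpace ℝ (Fin n) → ℂ) :
    EuclideanSpace ℝ (Fin n) → ℂ :=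
  (List.finRange n).foldr (fun i g => pdIter i (α i) g) f

/-- The mixed derivative `∂_t^m ∂_x^α u` of a function `u = u(t,x)`. -/
def mixDeriv {n : ℕ} (m : ℕ) (α : Fin n → ℕ) (u : ℝ → EuclideanSpace ℝ (Fin n) → ℂ)
    (t : ℝ) (x : EuclideanSpace ℝ (Fin n)) : ℂ :=
  iteratedDeriv m (fun τ => pdMulti α (u τ) x) t

namespace UCC

/-! ### Divided differences and the Remez-type inequality -/

/-- Iterated Rolle: if `g 0` has `k + 1` zeros, then `g k`, its `k`-th derivative, has one. -/
lemma rolle_iter (k : ℕ) : ∀ (g : ℕ → ℝ → ℝ) (D : Set ℝ) (z : ℕ → ℝ), D.OrdConnected →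
    (∀ j, ∀ x ∈ D, HasDerivAt (g j) (g (j + 1) x) x) →
    (∀ i ≤ k, z i ∈ D) → (∀ i < k, z i < z (i + 1)) → (∀ i ≤ k, g 0 (z i) = 0) →
    ∃ ξ ∈ D, g k ξ = 0 := by
  induction k with
  | zero =>
    intro g D z _ _ hz _ h0
    exact ⟨z 0, hz 0 le_rfl, h0 0 le_rfl⟩
  | succ k ih =>
    intro g D z hD hg hz hmono h0
    have key : ∀ i, ∃ c, i ≤ k → (z i < c ∧ c < z (i + 1) ∧ g 1 c = 0) := by
      intro i
      by_cases hi : i ≤ k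
      · have hsub : Icc (z i) (z (i + 1)) ⊆ D := hD.out (hz i (by omega)) (hz (i + 1) (by omega))
        obtain ⟨c, hc, hc'⟩ := exists_hasDerivAt_eq_zero (f := g 0) (f' := g 1)
          (hmono i (by omega))
          (fun x hx => (hg 0 x (hsub hx)).continuousAt.continuousWithinAt)
          (by rw [h0 i (by omega), h0 (i + 1) (by omega)])
          (fun x hx => hg 0 x (hsub (Ioo_subset_Icc_self hx)))
        exact ⟨c, fun _ => ⟨hc.1, hc.2, hc'⟩⟩
      · exact ⟨0, fun h => absurd h hi⟩
    choose c hc using key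
    refine ih (fun j => g (j + 1)) D c hD (fun j => hg (j + 1)) ?_ ?_ ?_
    · intro i hi
      obtain ⟨h1, h2, _⟩ := hc i hi
      exact hD.out (hz i (by omega)) (hz (i + 1) (by omega)) ⟨h1.le, h2.le⟩
    · intro i hi
      exact (hc i hi.le).2.1.trans (hc (i + 1) (by omega)).1
    · intro i hi
      exact (hc i hi).2.2

lemma polynomial_hasDerivAt_iter (q : Polynomial ℝ) (j : ℕ) (x : ℝ) :
    HasDerivAt (fun y => (Polynomial.derivative^[j] q).eval y)
      ((Polynomial.derivative^[j + 1] q).eval x) x := by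
  rw [Function.iterate_succ_apply']
  exact Polynomial.hasDerivAt _ x

/-- The divided difference of `h 0` at `k + 1` nodes is a value of `h k / k!`. -/
lemma divided_difference (k : ℕ) (h : ℕ → ℝ → ℝ) (D : Set ℝ) (z : ℕ → ℝ) (hD : D.OrdConnected)
    (hh : ∀ j, ∀ x ∈ D, HasDerivAt (h j) (h (j + 1) x) x)
    (hz : ∀ i ≤ k, z i ∈ D) (hmono : ∀ i < k, z i < z (i + 1))
    (hinj : Set.InjOn z (Finset.range (k + 1))) :
    ∃ ξ ∈ D, h k ξ = k.factorial *
      ∑ i ∈ Finset.range (k + 1), h 0 (z i) / ∏ j ∈ (Finset.range (k + 1)).erase i, (z i - z j) := by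
  classical
  set s := Finset.range (k + 1) with hs
  set q := Lagrange.interpolate s z (fun i => h 0 (z i)) with hq
  have hdeg : q.degree < s.card := Lagrange.degree_interpolate_lt _ hinj
  have hcoef := Lagrange.coeff_eq_sum hinj hdeg
  have hev : ∀ i ∈ s, q.eval (z i) = h 0 (z i) := fun i hi =>
    Lagrange.eval_interpolate_at_node _ hinj hi
  have hnd : q.natDegree ≤ k := by
    rw [hs, Finset.card_range] at hdeg
    rcases eq_or_ne q 0 with h0 | h0
    · simp [h0]
    · rw [Polynomial.degree_eq_natDegree h0] at hdeg
      have := WithBot.coe_lt_coe.1 hdeg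
      exact Nat.lt_succ_iff.1 this
  obtain ⟨ξ, hξ, h0⟩ := rolle_iter k
    (fun j x => h j x - (Polynomial.derivative^[j] q).eval x) D z hD
    (fun j x hx => (hh j x hx).sub (polynomial_hasDerivAt_iter q j x)) hz hmono
    (fun i hi => by
      simp only [Function.iterate_zero, id]
      rw [hev i (by simp [hs]; omega), sub_self])
  refine ⟨ξ, hξ, ?_⟩
  have hconst : Polynomial.derivative^[k] q = Polynomial.C ((k.factorial : ℝ) * q.coeff k) := by
    have h1 : (Polynomial.derivative^[k] q).natDegree = 0 := by
      have := Polynomial.natDegree_iterate_derivative q k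
      omega
    rw [Polynomial.eq_C_of_natDegree_eq_zero h1, Polynomial.coeff_iterate_derivative]
    simp [Nat.descFactorial_self]
  have h2 : h k ξ = (k.factorial : ℝ) * q.coeff k := by
    have := sub_eq_zero.1 h0
    rw [this, hconst, Polynomial.eval_C]
  rw [h2]
  congr 1
  have : s.card - 1 = k := by simp [hs]
  rw [this] at hcoef
  rw [hcoef]
  exact Finset.sum_congr rfl fun i hi => by rw [hev i hi]

/-- A set of large measure contains many well-separated points. -/
lemma exists_separated (η : ℝ) (hη : 0 < η) (N : ℕ) : ∀ S : Set ℝ, BddBelow S →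
    ENNReal.ofReal (2 * N * η) < volume S →
    ∃ z : ℕ → ℝ, (∀ i ≤ N, z i ∈ S) ∧ ∀ i < N, z i + η ≤ z (i + 1) := by
  induction N with
  | zero =>
    intro S _ hS
    have : S.Nonempty := by
      rw [nonempty_iff_ne_empty]
      rintro rfl
      simp at hS
    obtain ⟨x, hx⟩ := this
    exact ⟨fun _ => x, by simp [hx], by simp⟩
  | succ N ih =>
    intro S hb hS
    have hne : S.Nonempty := by
      rw [nonempty_iff_ne_empty]
      rintro rfl
      simp at hS
    obtain ⟨x, hx, hxlt⟩ : ∃ x ∈ S, x < sInf S + η := exists_lt_of_csInf_lt hne (by linarith)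
    have hsub : S ⊆ (S ∩ Ici (x + η)) ∪ Icc (sInf S) (sInf S + 2 * η) := by
      intro y hy
      by_cases h : x + η ≤ y
      · exact Or.inl ⟨hy, h⟩
      · exact Or.inr ⟨csInf_le hb hy, by linarith⟩
    have hm : volume S ≤ volume (S ∩ Ici (x + η)) + ENNReal.ofReal (2 * η) := by
      refine (measure_mono hsub).trans ((measure_union_le _ _).trans ?_)
      rw [Real.volume_Icc]
      gcongr
      linarith
    have h2 : ENNReal.ofReal (2 * N * η) < volume (S ∩ Ici (x + η)) := by
      by_contra hcon
      push Not at hcon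
      have : volume S ≤ ENNReal.ofReal (2 * (N + 1 : ℕ) * η) := by
        refine hm.trans ((add_le_add_left hcon _).trans ?_)
        rw [← ENNReal.ofReal_add (by positivity) (by positivity)]
        apply le_of_eq
        congr 1
        push_cast
        ring
      exact absurd hS (not_lt.2 this)
    obtain ⟨z, hz1, hz2⟩ := ih _ (hb.mono inter_subset_left) h2
    refine ⟨fun i => Nat.casesOn i x z, ?_, ?_⟩
    · rintro (_ | i) hi
      · exact hx
      · exact (hz1 i (by omega)).1
    · rintro (_ | i) hi
      · exact (hz1 0 (by omega)).2
      · exact hz2 i (by omega)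

/-- Lower bound for the denominators of the Lagrange weights at `η`-separated nodes. -/
lemma prod_sep_lower (η : ℝ) (hη : 0 < η) (N : ℕ) (z : ℕ → ℝ)
    (hz : ∀ i < N, z i + η ≤ z (i + 1)) (i : ℕ) (hi : i ≤ N) :
    η ^ N * (i.factorial * (N - i).factorial : ℝ) ≤
      ∏ j ∈ (Finset.range (N + 1)).erase i, |z i - z j| := by
  have hsep : ∀ d a, a + d ≤ N → z a + d * η ≤ z (a + d) := by
    intro d
    induction d with
    | zero => intro a _; simp
    | succ d ih =>
      intro a had
      have h1 := ih a (by omega)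
      have h2 := hz (a + d) (by omega)
      push_cast
      rw [← add_assoc]
      linarith
  have hsplit : (Finset.range (N + 1)).erase i =
      (Finset.range i) ∪ (Finset.range (N - i)).image (fun j => i + 1 + j) := by
    ext j
    simp only [Finset.mem_erase, Finset.mem_range, Finset.mem_union, Finset.mem_image]
    constructor
    · rintro ⟨h1, h2⟩
      by_cases h : j < i
      · exact Or.inl h
      · exact Or.inr ⟨j - i - 1, by omega, by omega⟩
    · rintro (h | ⟨a, ha, rfl⟩) <;> omega
  have hdisj : Disjoint (Finset.range i) ((Finset.range (N - i)).image (fun j => i + 1 + j)) := by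
    rw [Finset.disjoint_left]
    intro j hj
    simp only [Finset.mem_range, Finset.mem_image, not_exists, not_and] at *
    intro a _ h
    omega
  rw [hsplit, Finset.prod_union hdisj,
    Finset.prod_image (fun a _ b _ h => by simpa using h)]
  have hA : η ^ i * (i.factorial : ℝ) ≤ ∏ j ∈ Finset.range i, |z i - z j| := by
    have : η ^ i * (i.factorial : ℝ) = ∏ j ∈ Finset.range i, (η * ((i - j : ℕ) : ℝ)) := by
      rw [Finset.prod_mul_distrib, Finset.prod_const, Finset.card_range, ← Nat.cast_prod]
      congr 2
      rw [← Finset.prod_range_reflect, ← Finset.prod_range_add_one_eq_factorial]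
      exact Finset.prod_congr rfl fun j hj => by
        have := Finset.mem_range.1 hj
        omega
    rw [this]
    refine Finset.prod_le_prod (fun j _ => by positivity) fun j hj => ?_
    have hj' := Finset.mem_range.1 hj
    have := hsep (i - j) j (by omega)
    rw [show j + (i - j) = i by omega] at this
    refine le_trans ?_ (le_abs_self _)
    linarith
  have hB : η ^ (N - i) * ((N - i).factorial : ℝ) ≤
      ∏ j ∈ Finset.range (N - i), |z i - z (i + 1 + j)| := by
    have : η ^ (N - i) * ((N - i).factorial : ℝ) =
        ∏ j ∈ Finset.range (N - i), (η * ((j + 1 : ℕ) : ℝ)) := by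
      rw [Finset.prod_mul_distrib, Finset.prod_const, Finset.card_range, ← Nat.cast_prod,
        Finset.prod_range_add_one_eq_factorial]
    rw [this]
    refine Finset.prod_le_prod (fun j _ => by positivity) fun j hj => ?_
    have hj' := Finset.mem_range.1 hj
    have := hsep (j + 1) i (by omega)
    rw [show i + (j + 1) = i + 1 + j by omega] at this
    rw [abs_sub_comm]
    refine le_trans ?_ (le_abs_self _)
    linarith
  calc η ^ N * (i.factorial * (N - i).factorial : ℝ)
      = (η ^ i * (i.factorial : ℝ)) * (η ^ (N - i) * ((N - i).factorial : ℝ)) := by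
        rw [show η ^ N = η ^ i * η ^ (N - i) by rw [← pow_add]; congr 1; omega]
        ring
    _ ≤ _ := by gcongr

lemma sum_inv_factorial (N : ℕ) :
    ∑ i ∈ Finset.range (N + 1), (1 : ℝ) / (i.factorial * (N - i).factorial) =
      2 ^ N / N.factorial := by
  rw [eq_div_iff (by positivity), Finset.sum_mul]
  have : (2 : ℝ) ^ N = ∑ i ∈ Finset.range (N + 1), ((N.choose i : ℕ) : ℝ) := by
    rw [← Nat.cast_sum, Nat.sum_range_choose]; simp
  rw [this]
  refine Finset.sum_congr rfl fun i hi => ?_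
  have hi' : i ≤ N := by simpa [Nat.lt_succ_iff] using hi
  rw [Nat.cast_choose ℝ hi']
  ring

/-- Interpolation at separated points of `S` bounds `h 0 0` by the size of `h 0` on `S`. The
error term carries no power of `δ⁻¹`, because all nodes lie at distance at most `1` from `0`. -/
lemma remez_step (N : ℕ) (h : ℕ → ℝ → ℝ)
    (hh : ∀ j, ∀ x ∈ Icc (0 : ℝ) 1, HasDerivAt (h j) (h (j + 1) x) x)
    (S : Set ℝ) (hS : S ⊆ Ioc 0 1) (δ : ℝ) (hδ : 0 < δ) (hvol : ENNReal.ofReal δ ≤ volume S)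
    (ε : ℝ) (hε : 0 ≤ ε) (hle : ∀ τ ∈ S, |h 0 τ| ≤ ε) (M : ℝ)
    (hM : ∀ τ ∈ Icc (0 : ℝ) 1, |h (N + 1) τ| ≤ (N + 1).factorial * M) :
    |h 0 0| ≤ ε * (Real.exp 1 * (4 * Real.exp 1 / δ) ^ N) + M := by
  classical
  set η : ℝ := δ / (2 * (N + 1)) with hη
  have hηpos : 0 < η := by positivity
  have hb : BddBelow S := ⟨0, fun x hx => (hS hx).1.le⟩
  have hlt : ENNReal.ofReal (2 * N * η) < volume S := by
    refine lt_of_lt_of_le ((ENNReal.ofReal_lt_ofReal_iff hδ).2 ?_) hvol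
    rw [hη, mul_div_assoc', div_lt_iff₀ (by positivity)]
    nlinarith
  obtain ⟨τ, hτS, hτ⟩ := exists_separated η hηpos N S hb hlt
  have hτ01 : ∀ i ≤ N, 0 < τ i ∧ τ i ≤ 1 := fun i hi => ⟨(hS (hτS i hi)).1, (hS (hτS i hi)).2⟩
  set z : ℕ → ℝ := fun i => Nat.casesOn i 0 τ with hzdef
  have hz0 : z 0 = 0 := rfl
  have hzs : ∀ i, z (i + 1) = τ i := fun i => rfl
  have hmono : ∀ i < N + 1, z i < z (i + 1) := by
    rintro (_ | i) hi
    · exact (hτ01 0 (by omega)).1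
    · rw [hzs, hzs]; linarith [hτ i (by omega)]
  have hlt' : ∀ d a, a + d < N + 1 → z a < z (a + d + 1) := by
    intro d
    induction d with
    | zero => intro a ha; exact hmono a ha
    | succ d ih => intro a ha; exact (ih a (by omega)).trans (hmono _ (by omega))
  have hlt2 : ∀ a b, a < b → b ≤ N + 1 → z a < z b := by
    intro a b hab hb
    have := hlt' (b - a - 1) a (by omega)
    rwa [show a + (b - a - 1) + 1 = b by omega] at this
  have hinj : Set.InjOn z (Finset.range (N + 1 + 1)) := by
    intro a ha b hb hab
    simp only [Finset.coe_range, mem_Iio] at ha hb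
    rcases lt_trichotomy a b with h1 | h1 | h1
    · exact absurd hab (hlt2 a b h1 (by omega)).ne
    · exact h1
    · exact absurd hab.symm (hlt2 b a h1 (by omega)).ne
  have hzD : ∀ i ≤ N + 1, z i ∈ Icc (0 : ℝ) 1 := by
    rintro (_ | i) hi
    · simp [hz0]
    · exact ⟨(hτ01 i (by omega)).1.le, (hτ01 i (by omega)).2⟩
  obtain ⟨ξ, hξ, hdd⟩ := divided_difference (N + 1) h (Icc 0 1) z ordConnected_Icc hh hzD hmono hinj
  rw [Finset.sum_range_succ'] at hdd
  have herase0 : (Finset.range (N + 1 + 1)).erase 0 = (Finset.range (N + 1)).image (· + 1) := by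
    ext j
    simp only [Finset.mem_erase, Finset.mem_range, Finset.mem_image]
    constructor
    · rintro ⟨h1, h2⟩; exact ⟨j - 1, by omega, by omega⟩
    · rintro ⟨a, ha, rfl⟩; omega
  have heraseS : ∀ i, i ≤ N → (Finset.range (N + 1 + 1)).erase (i + 1) =
      insert 0 (((Finset.range (N + 1)).erase i).image (· + 1)) := by
    intro i hi
    ext j
    simp only [Finset.mem_erase, Finset.mem_range, Finset.mem_image, Finset.mem_insert]
    constructor
    · rintro ⟨h1, h2⟩
      rcases Nat.eq_zero_or_pos j with h | h
      · exact Or.inl h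
      · exact Or.inr ⟨j - 1, by omega, by omega⟩
    · rintro (rfl | ⟨a, ha, rfl⟩) <;> omega
  have hsucc : Function.Injective (fun i : ℕ => i + 1) := fun a b h => by simpa using h
  set W : ℝ := ∏ j ∈ Finset.range (N + 1), τ j with hW
  have hWpos : 0 < W := Finset.prod_pos fun j hj =>
    (hτ01 j (by simpa [Nat.lt_succ_iff] using hj)).1
  have hWle : W ≤ 1 := Finset.prod_le_one
    (fun j hj => (hτ01 j (by simpa [Nat.lt_succ_iff] using hj)).1.le)
    (fun j hj => (hτ01 j (by simpa [Nat.lt_succ_iff] using hj)).2)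
  have hT0 : |h 0 (z 0) / ∏ j ∈ (Finset.range (N + 1 + 1)).erase 0, (z 0 - z j)| =
      |h 0 0| / W := by
    rw [herase0, Finset.prod_image hsucc.injOn, abs_div, Finset.abs_prod]
    congr 1
    refine Finset.prod_congr rfl fun j hj => ?_
    rw [hz0, hzs, zero_sub, abs_neg,
      abs_of_pos (hτ01 j (by simpa [Nat.lt_succ_iff] using hj)).1]
  have hTi : ∀ i ∈ Finset.range (N + 1),
      |h 0 (z (i + 1)) / ∏ j ∈ (Finset.range (N + 1 + 1)).erase (i + 1), (z (i + 1) - z j)| ≤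
        ε / η ^ N * (1 / (i.factorial * (N - i).factorial)) / W := by
    intro i hi
    have hi' : i ≤ N := by simpa [Nat.lt_succ_iff] using hi
    rw [heraseS i hi', Finset.prod_insert (by simp), Finset.prod_image hsucc.injOn, abs_div,
      abs_mul, Finset.abs_prod, hz0, sub_zero]
    simp only [hzs]
    rw [abs_of_pos (hτ01 i hi').1]
    have hlow := prod_sep_lower η hηpos N τ hτ i hi'
    have hWi : W ≤ τ i := by
      rw [hW, ← Finset.mul_prod_erase _ _ hi]
      refine mul_le_of_le_one_right (hτ01 i hi').1.le (Finset.prod_le_one ?_ ?_)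
      · intro j hj
        exact (hτ01 j (by simpa [Nat.lt_succ_iff] using Finset.mem_of_mem_erase hj)).1.le
      · intro j hj
        exact (hτ01 j (by simpa [Nat.lt_succ_iff] using Finset.mem_of_mem_erase hj)).2
    have : ε / η ^ N * (1 / (i.factorial * (N - i).factorial)) / W =
        ε / (W * (η ^ N * (i.factorial * (N - i).factorial : ℝ))) := by
      field_simp
    rw [this]
    gcongr
    · exact hle _ (hτS i hi')
    · exact (hτ01 i hi').1.le
  have hsum : |∑ i ∈ Finset.range (N + 1),
      h 0 (z (i + 1)) / ∏ j ∈ (Finset.range (N + 1 + 1)).erase (i + 1), (z (i + 1) - z j)| ≤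
        ε / η ^ N * (2 ^ N / N.factorial) / W := by
    refine (Finset.abs_sum_le_sum_abs _ _).trans ((Finset.sum_le_sum hTi).trans (le_of_eq ?_))
    rw [← Finset.sum_div, ← Finset.mul_sum, sum_inv_factorial]
  set Sg := ∑ i ∈ Finset.range (N + 1),
      h 0 (z (i + 1)) / ∏ j ∈ (Finset.range (N + 1 + 1)).erase (i + 1), (z (i + 1) - z j) with hSg
  set T := h 0 (z 0) / ∏ j ∈ (Finset.range (N + 1 + 1)).erase 0, (z 0 - z j) with hT
  have hfpos : (0 : ℝ) < (N + 1).factorial := by positivity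
  have h1 : |Sg + T| ≤ M := by
    have := hM ξ hξ
    rw [hdd, abs_mul, abs_of_pos hfpos] at this
    exact le_of_mul_le_mul_left this hfpos
  have hMnn : 0 ≤ M := (abs_nonneg _).trans h1
  have h2 : |h 0 0| / W ≤ M + ε / η ^ N * (2 ^ N / N.factorial) / W := by
    rw [← hT0]
    have : T = (Sg + T) - Sg := by ring
    rw [this]
    exact (abs_sub _ _).trans (add_le_add h1 hsum)
  have h3 : |h 0 0| ≤ W * M + ε / η ^ N * (2 ^ N / N.factorial) := by
    rw [div_le_iff₀ hWpos] at h2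
    refine h2.trans (le_of_eq ?_)
    field_simp
  have h4 : W * M ≤ M := mul_le_of_le_one_left hMnn hWle
  -- `(N + 1) ^ N / N! = (N + 1) ^ (N + 1) / (N + 1)! ≤ e ^ (N + 1)`
  have h5 : ((N : ℝ) + 1) ^ N / N.factorial ≤ Real.exp 1 * Real.exp 1 ^ N := by
    have := Real.pow_div_factorial_le_exp (x := (N : ℝ) + 1) (by positivity) (N + 1)
    have he : Real.exp ((N : ℝ) + 1) = Real.exp 1 * Real.exp 1 ^ N := by
      rw [Real.exp_add, ← Real.exp_nat_mul, mul_one, mul_comm]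
    rw [← he]
    refine le_trans (le_of_eq ?_) this
    rw [Nat.factorial_succ]
    push_cast
    field_simp
    ring
  have h6 : ε / η ^ N * (2 ^ N / N.factorial) ≤
      ε * (Real.exp 1 * (4 * Real.exp 1 / δ) ^ N) := by
    have : ε / η ^ N * (2 ^ N / N.factorial) =
        ε * ((((N : ℝ) + 1) ^ N / N.factorial) * (4 / δ) ^ N) := by
      rw [hη, div_pow, div_pow, mul_pow, show (4 : ℝ) = 2 * 2 by norm_num, mul_pow]
      field_simp
    rw [this]
    refine mul_le_mul_of_nonneg_left ?_ hε
    calc _ ≤ (Real.exp 1 * Real.exp 1 ^ N) * (4 / δ) ^ N := by gcongr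
      _ = _ := by rw [mul_assoc, ← mul_pow]; congr 2; ring
  linarith

/-- Remez-type inequality for a function with analytic-type derivative bounds. Interpolating at
about `log (L / a)` nodes makes the remainder at most `a / 2`. -/
lemma remez (h : ℕ → ℝ → ℝ)
    (hh : ∀ j, ∀ x ∈ Icc (0 : ℝ) 1, HasDerivAt (h j) (h (j + 1) x) x)
    (S : Set ℝ) (hS : S ⊆ Ioc 0 1) (δ : ℝ) (hδ : 0 < δ) (hδ1 : δ ≤ 1)
    (hvol : ENNReal.ofReal δ ≤ volume S)
    (ε : ℝ) (hle : ∀ τ ∈ S, |h 0 τ| ≤ ε) (L a : ℝ) (hL : 1 ≤ L) (ha : 0 < a) (haL : a ≤ L)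
    (ha0 : a ≤ |h 0 0|)
    (hM : ∀ k, ∀ τ ∈ Icc (0 : ℝ) 1, |h k τ| ≤ k.factorial * (L * (1 / 4) ^ k)) :
    (δ / 12) ^ (3 + 2 * Real.log (L / a)) ≤ ε := by
  set Λ := Real.log (L / a) with hΛ
  have hLa : 1 ≤ L / a := by rwa [one_le_div ha]
  have hΛ0 : 0 ≤ Λ := Real.log_nonneg hLa
  have hSne : S.Nonempty := by
    rw [nonempty_iff_ne_empty]
    rintro rfl
    simp at hvol
    linarith
  obtain ⟨σ, hσ⟩ := hSne
  have hε : 0 ≤ ε := (abs_nonneg _).trans (hle σ hσ)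
  set N : ℕ := ⌈1 + Λ⌉₊ with hN
  have hN1 : 1 + Λ ≤ N := Nat.le_ceil _
  have hN2 : (N : ℝ) ≤ 2 + Λ := by
    have := (Nat.ceil_lt_add_one (a := 1 + Λ) (by linarith)).le
    linarith
  have hstep := remez_step N h hh S hS δ hδ hvol ε hε hle (L * (1 / 4) ^ (N + 1))
    (fun τ hτ => hM (N + 1) τ hτ)
  have he1 : Real.exp 1 < 3 := lt_trans Real.exp_one_lt_d9 (by norm_num)
  have he2 : 2 < Real.exp 1 := lt_trans (by norm_num) Real.exp_one_gt_d9
  have hsmall : L * (1 / 4) ^ (N + 1) ≤ a / 2 := by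
    have h1 : L / a ≤ 4 ^ N := by
      rw [← Real.log_le_log_iff (by positivity) (by positivity), Real.log_pow]
      have : 1 ≤ Real.log 4 := by
        rw [Real.le_log_iff_exp_le (by norm_num)]; linarith
      nlinarith
    rw [div_le_iff₀ ha] at h1
    rw [pow_succ, one_div, inv_pow]
    have h4 : (0 : ℝ) < 4 ^ N := by positivity
    have : L * ((4 ^ N)⁻¹ * 4⁻¹) = (L / 4 ^ N) / 4 := by field_simp
    rw [this]
    have : L / 4 ^ N ≤ a := by rw [div_le_iff₀ h4]; linarith
    linarith
  have hx : δ / 12 < 1 := by linarith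
  have hx0 : 0 < δ / 12 := by positivity
  have hmain : a / 2 ≤ ε * (Real.exp 1 * (4 * Real.exp 1 / δ) ^ N) := by linarith
  have hC : Real.exp 1 * (4 * Real.exp 1 / δ) ^ N ≤ 3 * ((δ / 12) ^ N)⁻¹ := by
    rw [← inv_pow, inv_div]
    gcongr
    linarith
  have h2 : a / 2 ≤ ε * (3 * ((δ / 12) ^ N)⁻¹) :=
    hmain.trans (mul_le_mul_of_nonneg_left hC hε)
  have h3 : (a / 6) * (δ / 12) ^ N ≤ ε := by
    have hp : 0 < (δ / 12) ^ N := by positivity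
    have : ε = (ε * (3 * ((δ / 12) ^ N)⁻¹)) / 3 * (δ / 12) ^ N := by field_simp
    rw [this, show a / 6 = a / 2 / 3 by ring]
    gcongr
  refine le_trans ?_ h3
  have h4 : (δ / 12) ^ Λ ≤ a := by
    rw [Real.rpow_def_of_pos hx0]
    calc Real.exp (Real.log (δ / 12) * Λ) ≤ Real.exp (-Λ) := by
          apply Real.exp_le_exp.2
          have : Real.log (δ / 12) ≤ -1 := by
            rw [Real.log_le_iff_le_exp hx0, Real.exp_neg]
            rw [le_inv_comm₀ hx0 (Real.exp_pos _), inv_div]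
            rw [le_div_iff₀ hδ]; nlinarith
          nlinarith
      _ = a / L := by
          rw [Real.exp_neg, hΛ, Real.exp_log (by positivity), inv_div]
      _ ≤ a := div_le_self ha.le hL
  calc (δ / 12) ^ (3 + 2 * Λ) = (δ / 12) * (δ / 12) ^ Λ * (δ / 12) ^ (2 + Λ) := by
        rw [show 3 + 2 * Λ = 1 + Λ + (2 + Λ) by ring, Real.rpow_add hx0, Real.rpow_add hx0,
          Real.rpow_one]
    _ ≤ (1 / 6) * a * (δ / 12) ^ (N : ℝ) := by
        have := Real.rpow_le_rpow_of_exponent_ge hx0 hx.le hN2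
        gcongr
        linarith
    _ = a / 6 * (δ / 12) ^ N := by rw [Real.rpow_natCast]; ring

/-! ### Iterated directional derivatives -/

section Directional

variable {V : Type*} [NormedAddCommGroup V] [NormedSpace ℝ V]

/-- The iterated directional derivative `∂_{v₁} ⋯ ∂_{v_k} F` along a list `[v₁, …, v_k]`. -/
def dirD : List V → (V → ℂ) → V → ℂ
  | [], F => F
  | v :: l, F => fun p => fderiv ℝ (dirD l F) p v

lemma dirD_append (l l' : List V) (F : V → ℂ) : dirD (l ++ l') F = dirD l (dirD l' F) := by
  induction l with
  | nil => rfl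
  | cons v l ih => simp only [List.cons_append, dirD, ih]

variable {Ω : Set V} {F : V → ℂ}

lemma dirD_contDiffOn (hΩ : IsOpen Ω) (hF : ContDiffOn ℝ (⊤ : ℕ∞) F Ω) (l : List V) :
    ContDiffOn ℝ (⊤ : ℕ∞) (dirD l F) Ω := by
  induction l with
  | nil => exact hF
  | cons v l ih =>
    have : ContDiffOn ℝ (⊤ : ℕ∞) (fderiv ℝ (dirD l F)) Ω := ih.fderiv_of_isOpen hΩ le_rfl
    exact this.clm_apply contDiffOn_const

lemma dirD_differentiableAt (hΩ : IsOpen Ω) (hF : ContDiffOn ℝ (⊤ : ℕ∞) F Ω) (l : List V)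
    {p : V} (hp : p ∈ Ω) : DifferentiableAt ℝ (dirD l F) p :=
  ((dirD_contDiffOn hΩ hF l).contDiffAt (hΩ.mem_nhds hp)).differentiableAt (by simp)

/-- Directional derivatives of a smooth function commute. -/
lemma dirD_perm (hΩ : IsOpen Ω) (hF : ContDiffOn ℝ (⊤ : ℕ∞) F Ω) {l l' : List V}
    (h : l.Perm l') : ∀ p ∈ Ω, dirD l F p = dirD l' F p := by
  induction h with
  | nil => intros; rfl
  | @cons v l₁ l₂ _ ih =>
    intro p hp
    have : dirD l₁ F =ᶠ[𝓝 p] dirD l₂ F := by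
      filter_upwards [hΩ.mem_nhds hp] with q hq using ih q hq
    simp only [dirD]
    rw [this.fderiv_eq]
  | swap v w l =>
    intro p hp
    have hc := (dirD_contDiffOn hΩ hF l).contDiffAt (hΩ.mem_nhds hp)
    have hs : IsSymmSndFDerivAt ℝ (dirD l F) p :=
      hc.isSymmSndFDerivAt (by simpa using WithTop.coe_le_coe.2 (le_top (a := (2 : ℕ∞))))
    have hd : DifferentiableAt ℝ (fderiv ℝ (dirD l F)) p :=
      (hc.fderiv_right (m := (⊤ : ℕ∞)) le_rfl).differentiableAt (by simp)
    simp only [dirD]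
    rw [fderiv_clm_apply hd (differentiableAt_const _), fderiv_clm_apply hd (differentiableAt_const _)]
    simpa using (hs w v)
  | trans _ _ ih1 ih2 =>
    intro p hp
    rw [ih1 p hp, ih2 p hp]

/-- If all words of length `k` in the directions `e i` satisfy a product bound, so does the `k`-th
derivative in the direction `∑ c i • e i`. -/
lemma dirD_expand (hΩ : IsOpen Ω) (hF : ContDiffOn ℝ (⊤ : ℕ∞) F Ω) {ι : Type*} [Fintype ι]
    (e : ι → V) (c d : ι → ℝ) {p : V} (hp : p ∈ Ω) (C : ℝ) (k : ℕ)
    (hw : ∀ w : List ι, w.length = k → ‖dirD (w.map e) F p‖ ≤ C * (w.map d).prod) :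
    ‖dirD (List.replicate k (∑ i, c i • e i)) F p‖ ≤ C * (∑ i, |c i| * d i) ^ k := by
  set v := ∑ i, c i • e i with hv
  have key : ∀ q : ℕ, ∀ w : List ι, q + w.length = k →
      ‖dirD (List.replicate q v ++ w.map e) F p‖ ≤ C * ((∑ i, |c i| * d i) ^ q * (w.map d).prod) := by
    intro q
    induction q with
    | zero => intro w h; simpa using hw w (by omega)
    | succ q ih =>
      intro w h
      have h1 : dirD (List.replicate (q + 1) v ++ w.map e) F p =
          ∑ i, (c i : ℂ) * dirD (List.replicate q v ++ (i :: w).map e) F p := by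
        rw [List.replicate_succ, List.cons_append]
        simp only [dirD]
        rw [hv, map_sum]
        refine Finset.sum_congr rfl fun i _ => ?_
        rw [map_smul, ← hv]
        have hperm : (e i :: (List.replicate q v ++ w.map e)).Perm
            (List.replicate q v ++ (i :: w).map e) := by
          simpa using (List.perm_middle (a := e i) (l₁ := List.replicate q v) (l₂ := w.map e)).symm
        rw [← dirD_perm hΩ hF hperm p hp]
        simp [dirD]
      rw [h1]
      refine (norm_sum_le _ _).trans ?_
      have : C * ((∑ i, |c i| * d i) ^ (q + 1) * (w.map d).prod) =
          ∑ i, |c i| * (C * ((∑ i, |c i| * d i) ^ q * ((i :: w).map d).prod)) := by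
        simp only [List.map_cons, List.prod_cons]
        rw [pow_succ]
        calc _ = (∑ i, |c i| * d i) * (C * (∑ i, |c i| * d i) ^ q * (w.map d).prod) := by ring
          _ = _ := by
            rw [Finset.sum_mul]
            exact Finset.sum_congr rfl fun i _ => by ring
      rw [this]
      refine Finset.sum_le_sum fun i _ => ?_
      rw [norm_mul, Complex.norm_real, Real.norm_eq_abs]
      exact mul_le_mul_of_nonneg_left (ih (i :: w) (by simp; omega)) (abs_nonneg _)
  simpa using key k [] (by simp)

/-- The Remez-type inequality along a segment `p + τ v`, `0 ≤ τ ≤ 1`. -/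
lemma remez_segment (hΩ : IsOpen Ω) (hF : ContDiffOn ℝ (⊤ : ℕ∞) F Ω) (p v : V)
    (hpv : ∀ τ ∈ Icc (0 : ℝ) 1, p + τ • v ∈ Ω)
    (S : Set ℝ) (hS : S ⊆ Ioc 0 1) (δ : ℝ) (hδ : 0 < δ) (hδ1 : δ ≤ 1)
    (hvol : ENNReal.ofReal δ ≤ volume S)
    (ε : ℝ) (hle : ∀ τ ∈ S, ‖F (p + τ • v)‖ ≤ ε) (L a : ℝ) (hL : 1 ≤ L) (ha : 0 < a) (haL : a ≤ L)
    (ha0 : a ≤ ‖F p‖)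
    (hM : ∀ k, ∀ q ∈ Ω, ‖dirD (List.replicate k v) F q‖ ≤ k.factorial * (L * (1 / 4) ^ k)) :
    (δ / 12) ^ (3 + 2 * Real.log (L / a)) ≤ ε := by
  -- `θ` is a unimodular number with `θ * F p = ‖F p‖`
  obtain ⟨θ, hθ1, hθ⟩ : ∃ θ : ℂ, ‖θ‖ = 1 ∧ θ * F p = ‖F p‖ := by
    have hne : F p ≠ 0 := norm_pos_iff.1 (ha.trans_le ha0)
    have hne' : (‖F p‖ : ℂ) ≠ 0 := by exact_mod_cast (norm_pos_iff.2 hne).ne'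
    refine ⟨‖F p‖ / F p, ?_, ?_⟩
    · rw [norm_div, Complex.norm_real, norm_norm, div_self (norm_ne_zero_iff.2 hne)]
    · field_simp
  have hre : ∀ z : ℂ, |(θ * z).re| ≤ ‖z‖ := fun z => by
    refine (Complex.abs_re_le_norm _).trans ?_
    rw [norm_mul, hθ1, one_mul]
  refine remez (fun k τ => (θ * dirD (List.replicate k v) F (p + τ • v)).re) ?_ S hS δ hδ hδ1 hvol ε
    (fun τ hτ => (hre _).trans (hle τ hτ)) L a hL ha haL ?_
    (fun k τ hτ => (hre _).trans (hM k _ (hpv τ hτ)))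
  · intro j x hx
    have hd := (dirD_differentiableAt hΩ hF (List.replicate j v) (hpv x hx)).hasFDerivAt
    have hl : HasDerivAt (fun τ : ℝ => p + τ • v) v x := by
      simpa using ((hasDerivAt_id x).smul_const v).const_add p
    have hcomp := hd.comp_hasDerivAt x hl
    have h2 := hcomp.const_mul θ
    exact Complex.reCLM.hasFDerivAt.comp_hasDerivAt x h2
  · simp only [zero_smul, add_zero, List.replicate_zero, dirD, hθ, Complex.ofReal_re]
    rwa [abs_of_nonneg (norm_nonneg _)]

end Directional

/-! ### Derivative bounds on the cylinder -/

variable {n : ℕ}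

/-- The space `ℝ × ℝⁿ` of pairs `(u, x)`. -/
abbrev Sp (n : ℕ) := ℝ × EuclideanSpace ℝ (Fin n)

/-- The open cylinder `(-1,1) × B(0,1)`. -/
def Cyl (n : ℕ) : Set (Sp n) := Set.Ioo (-1 : ℝ) 1 ×ˢ ball (0 : EuclideanSpace ℝ (Fin n)) 1

lemma isOpen_Cyl : IsOpen (Cyl n) := isOpen_Ioo.prod isOpen_ball

lemma convex_Cyl : Convex ℝ (Cyl n) := (convex_Ioo _ _).prod (convex_ball _ _)

/-- The coordinate directions of `ℝ × ℝⁿ`: `none` stands for `u` and `some i` for `x i`. -/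
def dir : Option (Fin n) → Sp n
  | none => (1, 0)
  | some i => (0, EuclideanSpace.single i 1)

lemma dir_decomp (v : Sp n) :
    v = ∑ o, (Option.elim o v.1 (fun i => v.2 i)) • (dir o : Sp n) := by
  rw [Fintype.sum_option]
  simp only [Option.elim, dir]
  refine Prod.ext ?_ ?_
  · simp [Prod.fst_sum]
  · simp only [Prod.smul_mk, smul_zero, Prod.snd_add, Prod.snd_sum, zero_add]
    ext j
    simp [Pi.single_apply]

lemma fderiv_slice {G : Sp n → ℂ} {u : ℝ} {x : EuclideanSpace ℝ (Fin n)}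
    (hG : DifferentiableAt ℝ G (u, x)) (i : Fin n) :
    pd i (fun y => G (u, y)) x = fderiv ℝ G (u, x) (dir (some i)) := by
  have h2 : HasFDerivAt (fun y : EuclideanSpace ℝ (Fin n) => (u, y))
      (ContinuousLinearMap.inr ℝ ℝ (EuclideanSpace ℝ (Fin n))) x := hasFDerivAt_prodMk_right u x
  have := (hG.hasFDerivAt.comp x h2).fderiv
  unfold pd
  change fderiv ℝ (G ∘ fun y => (u, y)) x _ = _
  rw [this]
  rfl

lemma pdIter_slice {G : Sp n → ℂ} (hG : ContDiffOn ℝ (⊤ : ℕ∞) G (Cyl n)) (i : Fin n) {u : ℝ}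
    (hu : u ∈ Ioo (-1 : ℝ) 1) (g : EuclideanSpace ℝ (Fin n) → ℂ)
    (hg : ∀ x ∈ ball (0 : EuclideanSpace ℝ (Fin n)) 1, g x = G (u, x)) (k : ℕ) :
    ∀ x ∈ ball (0 : EuclideanSpace ℝ (Fin n)) 1,
      pdIter i k g x = dirD (List.replicate k (dir (some i))) G (u, x) := by
  induction k with
  | zero => exact hg
  | succ k ih =>
    intro x hx
    have heq : pdIter i k g =ᶠ[𝓝 x]
        fun y => dirD (List.replicate k (dir (some i))) G (u, y) := by
      filter_upwards [isOpen_ball.mem_nhds hx] with y hy using ih y hy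
    change pd i (pdIter i k g) x = _
    have : pd i (pdIter i k g) x =
        pd i (fun y => dirD (List.replicate k (dir (some i))) G (u, y)) x := by
      unfold pd; rw [heq.fderiv_eq]
    rw [this, fderiv_slice (dirD_differentiableAt isOpen_Cyl hG _ ⟨hu, hx⟩)]
    rfl

lemma pdMulti_slice {f : ℝ → EuclideanSpace ℝ (Fin n) → ℂ}
    (hF : ContDiffOn ℝ (⊤ : ℕ∞) (fun p : Sp n => f p.1 p.2) (Cyl n)) (α : Fin n → ℕ) {u : ℝ}
    (hu : u ∈ Ioo (-1 : ℝ) 1) : ∀ x ∈ ball (0 : EuclideanSpace ℝ (Fin n)) 1,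
      pdMulti α (f u) x = dirD ((List.finRange n).flatMap
        fun i => List.replicate (α i) (dir (some i))) (fun p : Sp n => f p.1 p.2) (u, x) := by
  have key : ∀ l : List (Fin n), ∀ x ∈ ball (0 : EuclideanSpace ℝ (Fin n)) 1,
      l.foldr (fun i g => pdIter i (α i) g) (f u) x = dirD (l.flatMap
        fun i => List.replicate (α i) (dir (some i))) (fun p : Sp n => f p.1 p.2) (u, x) := by
    intro l
    induction l with
    | nil => intro x _; rfl
    | cons i l ih =>
      intro x hx
      rw [List.flatMap_cons, dirD_append, List.foldr_cons]
      exact pdIter_slice (dirD_contDiffOn isOpen_Cyl hF _) i hu _ ih _ x hx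
  exact key _

/-- The mixed derivatives are iterated directional derivatives on the cylinder. -/
lemma mixDeriv_eq {f : ℝ → EuclideanSpace ℝ (Fin n) → ℂ}
    (hF : ContDiffOn ℝ (⊤ : ℕ∞) (fun p : Sp n => f p.1 p.2) (Cyl n)) (m : ℕ) (α : Fin n → ℕ)
    {x : EuclideanSpace ℝ (Fin n)} (hx : x ∈ ball (0 : EuclideanSpace ℝ (Fin n)) 1) :
    ∀ u ∈ Ioo (-1 : ℝ) 1, mixDeriv m α f u x = dirD (List.replicate m (dir none) ++
      (List.finRange n).flatMap fun i => List.replicate (α i) (dir (some i)))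
        (fun p : Sp n => f p.1 p.2) (u, x) := by
  unfold mixDeriv
  induction m with
  | zero =>
    intro u hu
    rw [iteratedDeriv_zero]
    exact pdMulti_slice hF α hu x hx
  | succ m ih =>
    intro u hu
    rw [iteratedDeriv_succ]
    rw [(show iteratedDeriv m (fun τ => pdMulti α (f τ) x) =ᶠ[𝓝 u] _ by
      filter_upwards [isOpen_Ioo.mem_nhds hu] with w hw using ih w hw).deriv_eq]
    set l := List.replicate m (dir none) ++
      (List.finRange n).flatMap fun i => List.replicate (α i) (dir (some i)) with hl
    have hd := (dirD_differentiableAt isOpen_Cyl hF l (p := (u, x)) ⟨hu, hx⟩).hasFDerivAt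
    have h2 : HasDerivAt (fun w : ℝ => ((w, x) : Sp n)) (1, 0) u :=
      (hasDerivAt_id u).prodMk (hasDerivAt_const u x)
    have := (hd.comp_hasDerivAt u h2).deriv
    rw [List.replicate_succ, List.cons_append, ← hl]
    exact this

/-- A word in the coordinate directions is a rearrangement of its sorted form. -/
lemma word_perm (w : List (Option (Fin n))) :
    w.Perm (List.replicate (w.count none) none ++
      (List.finRange n).flatMap fun i => List.replicate (w.count (some i)) (some i)) := by
  rw [List.perm_iff_count]
  intro o
  rw [List.count_append, List.count_flatMap]
  cases o with
  | none =>
    simp [List.count_replicate, Function.comp_def]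
  | some j =>
    simp only [List.count_replicate, Function.comp_def]
    simp only [beq_iff_eq, Option.some.injEq, reduceCtorEq, if_false, zero_add]
    rw [← List.ofFn_eq_map, List.sum_ofFn]
    simp

/-- The derivative bounds of the theorem. -/
def GevreyBound (f : ℝ → EuclideanSpace ℝ (Fin n) → ℂ) (A B s : ℝ) : Prop :=
  ∀ (m : ℕ) (α : Fin n → ℕ), ∀ u ∈ Set.Ioo (-1:ℝ) 1,
      ∀ x ∈ ball (0 : EuclideanSpace ℝ (Fin n)) 1,
        ‖mixDeriv m α f u x‖ ≤
          A ^ m * B ^ (∑ i, α i) * (Nat.factorial m : ℝ) *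
            (Nat.factorial (∑ i, α i) : ℝ) ^ s

/-- The growth `exp ((1 - s) (λ B)^(1/(1-s)))` dominating `(λ B)^j / (j!)^(1-s)`. -/
lemma gevrey_growth {s l B : ℝ} (hs1 : s < 1) (hl : 0 < l) (hB : 1 ≤ B) (j : ℕ) :
    B ^ j * (j.factorial : ℝ) ^ s ≤
      j.factorial * (Real.exp ((1 - s) * l ^ (1 / (1 - s)) * B ^ (1 / (1 - s))) * (1 / l) ^ j) := by
  have h1s : 0 < 1 - s := by linarith
  set X : ℝ := (l * B) ^ (1 / (1 - s)) with hX
  have hX0 : 0 ≤ X := by positivity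
  have hf : (0 : ℝ) < j.factorial := by positivity
  have h1 := Real.pow_div_factorial_le_exp X hX0 j
  have h2 := Real.rpow_le_rpow (by positivity) h1 h1s.le
  rw [Real.div_rpow (by positivity) hf.le, ← Real.exp_mul] at h2
  have h3 : (X ^ j) ^ (1 - s) = (l * B) ^ j := by
    rw [← Real.rpow_natCast, ← Real.rpow_mul hX0, hX, ← Real.rpow_mul (by positivity),
      ← Real.rpow_natCast]
    congr 1
    field_simp
  rw [h3, div_le_iff₀ (by positivity), mul_pow] at h2
  have h4 : (1 - s) * l ^ (1 / (1 - s)) * B ^ (1 / (1 - s)) = X * (1 - s) := by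
    rw [hX, Real.mul_rpow hl.le (by linarith)]
    ring
  rw [h4]
  have h5 : (j.factorial : ℝ) ^ (1 - s) * (j.factorial : ℝ) ^ s = j.factorial := by
    rw [← Real.rpow_add hf]; simp
  calc B ^ j * (j.factorial : ℝ) ^ s
      = (l ^ j * B ^ j) * (j.factorial : ℝ) ^ s * (1 / l) ^ j := by
        rw [one_div, inv_pow]; field_simp
    _ ≤ (Real.exp (X * (1 - s)) * (j.factorial : ℝ) ^ (1 - s)) * (j.factorial : ℝ) ^ s *
        (1 / l) ^ j := by gcongr
    _ = ((j.factorial : ℝ) ^ (1 - s) * (j.factorial : ℝ) ^ s) *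
        (Real.exp (X * (1 - s)) * (1 / l) ^ j) := by ring
    _ = _ := by rw [h5]

/-- Derivatives along an arbitrary direction `v`, in terms of the weights `A` for `u` and `1 / l`
for each `x i`; the price of the small weights `1 / l` is the exponential factor. -/
lemma dirD_bound {f : ℝ → EuclideanSpace ℝ (Fin n) → ℂ}
    (hF : ContDiffOn ℝ (⊤ : ℕ∞) (fun p : Sp n => f p.1 p.2) (Cyl n)) {A B s l : ℝ} (hs1 : s < 1)
    (hl : 0 < l) (hA : 1 ≤ A) (hB : 1 ≤ B) (hf : GevreyBound f A B s) (v : Sp n) (k : ℕ)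
    {p : Sp n} (hp : p ∈ Cyl n) :
    ‖dirD (List.replicate k v) (fun p : Sp n => f p.1 p.2) p‖ ≤
      k.factorial * Real.exp ((1 - s) * l ^ (1 / (1 - s)) * B ^ (1 / (1 - s))) *
        (|v.1| * A + (∑ i, |v.2 i|) * (1 / l)) ^ k := by
  set L := Real.exp ((1 - s) * l ^ (1 / (1 - s)) * B ^ (1 / (1 - s))) with hL
  set d : Option (Fin n) → ℝ := fun o => Option.elim o A (fun _ => 1 / l) with hd
  have hmain := dirD_expand isOpen_Cyl hF (dir (n := n))
    (fun o => Option.elim o v.1 (fun i => v.2 i)) d hp (k.factorial * L) k ?_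
  · rw [← dir_decomp, Fintype.sum_option] at hmain
    simpa [hd, Finset.sum_mul] using hmain
  · intro w hwk
    set m := w.count none with hm
    set α : Fin n → ℕ := fun i => w.count (some i) with hα
    set j := ∑ i, α i with hj
    have hperm := word_perm w
    have hlen : m + j = k := by
      have := hperm.length_eq
      rw [hwk, List.length_append, List.length_replicate, List.length_flatMap] at this
      simp only [List.length_replicate] at this
      rw [← List.ofFn_eq_map, List.sum_ofFn] at this
      exact this.symm
    have hprod : (w.map d).prod = A ^ m * (1 / l) ^ j := by
      rw [(hperm.map d).prod_eq, List.map_append, List.prod_append, List.map_replicate,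
        List.prod_replicate, List.map_flatMap]
      congr 1
      rw [List.flatMap_def, List.prod_flatten, List.map_map, ← List.ofFn_eq_map, List.prod_ofFn]
      simp only [Function.comp_def, List.map_replicate, List.prod_replicate]
      simp [hd, Finset.prod_pow_eq_pow_sum, hj, hα]
    have hval : dirD (w.map dir) (fun p : Sp n => f p.1 p.2) p = mixDeriv m α f p.1 p.2 := by
      rw [mixDeriv_eq hF m α hp.2 p.1 hp.1,
        dirD_perm isOpen_Cyl hF (hperm.map dir) p hp]
      simp [List.map_append, List.map_flatMap, hm, hα]
    rw [hval, hprod]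
    refine (hf m α p.1 hp.1 p.2 hp.2).trans ?_
    have hfac : (m.factorial * j.factorial : ℝ) ≤ k.factorial := by
      rw [← hlen]
      exact_mod_cast Nat.le_of_dvd (Nat.factorial_pos _)
        (Nat.factorial_mul_factorial_dvd_factorial_add m j)
    calc A ^ m * B ^ j * (m.factorial : ℝ) * (j.factorial : ℝ) ^ s
        = A ^ m * m.factorial * (B ^ j * (j.factorial : ℝ) ^ s) := by ring
      _ ≤ A ^ m * m.factorial * (j.factorial * (L * (1 / l) ^ j)) := by
          exact mul_le_mul_of_nonneg_left (gevrey_growth hs1 hl hB j) (by positivity)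
      _ = (m.factorial * j.factorial) * (A ^ m * (L * (1 / l) ^ j)) := by ring
      _ ≤ k.factorial * (A ^ m * (L * (1 / l) ^ j)) := by gcongr
      _ = _ := by ring

lemma norm_le_one {f : ℝ → EuclideanSpace ℝ (Fin n) → ℂ}
    (hF : ContDiffOn ℝ (⊤ : ℕ∞) (fun p : Sp n => f p.1 p.2) (Cyl n)) {A B s : ℝ}
    (hf : GevreyBound f A B s) {p : Sp n} (hp : p ∈ Cyl n) : ‖f p.1 p.2‖ ≤ 1 := by
  have h := hf 0 (fun _ => 0) p.1 hp.1 p.2 hp.2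
  rw [mixDeriv_eq hF 0 _ hp.2 p.1 hp.1] at h
  have h0 : (List.finRange n).flatMap (fun _ => ([] : List (Sp n))) = [] := by simp
  simpa [dirD, h0] using h

/-! ### Propagation in the `u` direction -/

/-- One step of propagation in the `u` direction. -/
lemma chain_step {f : ℝ → EuclideanSpace ℝ (Fin n) → ℂ}
    (hF : ContDiffOn ℝ (⊤ : ℕ∞) (fun p : Sp n => f p.1 p.2) (Cyl n)) {A B s : ℝ} (hs0 : 0 < s)
    (hs1 : s < 1) (hA : 1 ≤ A) (hB : 1 ≤ B) (hf : GevreyBound f A B s)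
    {x0 : EuclideanSpace ℝ (Fin n)} (hx0 : x0 ∈ ball (0 : EuclideanSpace ℝ (Fin n)) 1)
    {u0 u1 : ℝ} (hu0 : u0 ∈ Ioo (-1 : ℝ) 1) (hu1 : u1 ∈ Ioo (-1 : ℝ) 1)
    (hu : |u1 - u0| * A ≤ 1 / 4) {Λ : ℝ} (hΛ : 0 ≤ Λ) (hval : Real.exp (-Λ) ≤ ‖f u0 x0‖) :
    ∃ τ ∈ Icc (1 / 2 : ℝ) 1, Real.exp (-(8 * (Λ + 3) - 3)) ≤ ‖f (u0 + τ * (u1 - u0)) x0‖ := by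
  by_contra hcon
  push Not at hcon
  have h1s : 0 < 1 - s := by linarith
  have hBpos : 0 < B := by linarith
  -- with `l = 1 / B` the growth constant is at most `e`
  have hL : (1 - s) * (1 / B) ^ (1 / (1 - s)) * B ^ (1 / (1 - s)) = 1 - s := by
    rw [mul_assoc, ← Real.mul_rpow (by positivity) hBpos.le, one_div_mul_cancel hBpos.ne',
      Real.one_rpow, mul_one]
  have hrem := remez_segment (F := fun p : Sp n => f p.1 p.2) isOpen_Cyl hF (u0, x0)
    (u1 - u0, 0)
    (fun τ hτ => by
      have := convex_Cyl.add_smul_sub_mem (x := ((u0, x0) : Sp n)) (y := (u1, x0))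
        ⟨hu0, hx0⟩ ⟨hu1, hx0⟩ hτ
      simpa using this)
    (Icc (1 / 2) 1) (fun τ hτ => ⟨by linarith [hτ.1], hτ.2⟩) (1 / 2) (by norm_num) (by norm_num)
    (by rw [Real.volume_Icc]; norm_num)
    (Real.exp (-(8 * (Λ + 3) - 3)))
    (fun τ hτ => by simpa using (hcon τ hτ).le) (Real.exp 1) (Real.exp (-Λ))
    (Real.one_le_exp (by norm_num)) (Real.exp_pos _) (Real.exp_le_exp.2 (by linarith)) hval
    (fun k q hq => by
      refine (dirD_bound hF hs1 (l := 1 / B) (by positivity) hA hB hf _ k hq).trans ?_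
      rw [hL, mul_assoc]
      have h1 : Real.exp (1 - s) ≤ Real.exp 1 := Real.exp_le_exp.2 (by linarith)
      have h2 : |u1 - u0| * A + (∑ i, |(0 : EuclideanSpace ℝ (Fin n)) i|) * (1 / (1 / B)) ≤
          1 / 4 := by simpa using hu
      gcongr)
  rw [← Real.exp_sub, Real.log_exp] at hrem
  have h24 : Real.log 24 < 4 := by
    rw [Real.log_lt_iff_lt_exp (by norm_num)]
    have := Real.exp_one_gt_d9
    have h2 : Real.exp 4 = Real.exp 1 ^ 4 := by rw [← Real.exp_nat_mul]; norm_num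
    rw [h2]
    have : (2.7 : ℝ) ^ 4 ≤ Real.exp 1 ^ 4 := by gcongr; linarith
    norm_num at this ⊢
    linarith
  have h3 : ((1 : ℝ) / 2 / 12) ^ (3 + 2 * (1 - -Λ)) =
      Real.exp (-(Real.log 24 * (5 + 2 * Λ))) := by
    rw [show (1 : ℝ) / 2 / 12 = 24⁻¹ by norm_num, Real.rpow_def_of_pos (by norm_num), Real.log_inv]
    congr 1
    ring
  rw [h3] at hrem
  have := Real.exp_le_exp.1 hrem
  nlinarith

/-- Propagation of a lower bound in the `u` direction by a chain of steps of length `r`. -/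
lemma chain {f : ℝ → EuclideanSpace ℝ (Fin n) → ℂ}
    (hF : ContDiffOn ℝ (⊤ : ℕ∞) (fun p : Sp n => f p.1 p.2) (Cyl n)) {A B s : ℝ} (hs0 : 0 < s)
    (hs1 : s < 1) (hA : 1 ≤ A) (hB : 1 ≤ B) (hf : GevreyBound f A B s)
    {x0 : EuclideanSpace ℝ (Fin n)} (hx0 : x0 ∈ ball (0 : EuclideanSpace ℝ (Fin n)) 1)
    {r c : ℝ} (hr : 0 < r) (hrA : r * A ≤ 1 / 4) (hc : c ∈ Ioo (-1 : ℝ) 1) (k : ℕ) :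
    ∀ u0 ∈ Ioo (-1 : ℝ) 1, |u0 - c| ≤ r + k * (r / 2) → ∀ Λ : ℝ, 0 ≤ Λ →
      Real.exp (-Λ) ≤ ‖f u0 x0‖ →
      ∃ u' ∈ Ioo (-1 : ℝ) 1, |u' - c| ≤ r ∧ Real.exp (-(8 ^ k * (Λ + 3) - 3)) ≤ ‖f u' x0‖ := by
  induction k with
  | zero =>
    intro u0 hu0 hd Λ _ hv
    exact ⟨u0, hu0, by simpa using hd, by simpa using hv⟩
  | succ k ih =>
    intro u0 hu0 hd Λ hΛ hv
    by_cases hcase : |u0 - c| ≤ r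
    · refine ⟨u0, hu0, hcase, le_trans (Real.exp_le_exp.2 ?_) hv⟩
      have : (1 : ℝ) ≤ 8 ^ (k + 1) := one_le_pow₀ (by norm_num)
      nlinarith
    · push Not at hcase
      push_cast at hd
      obtain ⟨u1, hu1, huA, hdist⟩ : ∃ u1 ∈ Ioo (-1 : ℝ) 1, |u1 - u0| * A ≤ 1 / 4 ∧
          ∀ τ ∈ Icc (1 / 2 : ℝ) 1, u0 + τ * (u1 - u0) ∈ Ioo (-1 : ℝ) 1 ∧
            |u0 + τ * (u1 - u0) - c| ≤ |u0 - c| - r / 2 := by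
        rcases le_total c u0 with h | h
        · rw [abs_of_nonneg (sub_nonneg.2 h)] at hcase ⊢
          refine ⟨u0 - r, ⟨by linarith [hc.1], by linarith [hu0.2]⟩, ?_, ?_⟩
          · rw [show u0 - r - u0 = -r by ring, abs_neg, abs_of_pos hr]; exact hrA
          · rintro τ ⟨h1, h2⟩
            have e1 : r / 2 ≤ τ * r := by nlinarith
            have e2 : τ * r ≤ r := by nlinarith
            rw [show u0 + τ * (u0 - r - u0) = u0 - τ * r by ring]
            exact ⟨⟨by linarith [hc.1], by linarith [hu0.2]⟩, abs_le.2 ⟨by linarith, by linarith⟩⟩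
        · rw [abs_of_nonpos (sub_nonpos.2 h)] at hcase ⊢
          refine ⟨u0 + r, ⟨by linarith [hu0.1], by linarith [hc.2]⟩, ?_, ?_⟩
          · rw [show u0 + r - u0 = r by ring, abs_of_pos hr]; exact hrA
          · rintro τ ⟨h1, h2⟩
            have e1 : r / 2 ≤ τ * r := by nlinarith
            have e2 : τ * r ≤ r := by nlinarith
            rw [show u0 + τ * (u0 + r - u0) = u0 + τ * r by ring]
            exact ⟨⟨by linarith [hu0.1], by linarith [hc.2]⟩, abs_le.2 ⟨by linarith, by linarith⟩⟩
      obtain ⟨τ, hτ, hτv⟩ := chain_step hF hs0 hs1 hA hB hf hx0 hu0 hu1 huA hΛ hv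
      obtain ⟨hmem, hd'⟩ := hdist τ hτ
      obtain ⟨u', hu', h1, h2⟩ := ih _ hmem (by linarith) (8 * (Λ + 3) - 3) (by linarith) hτv
      refine ⟨u', hu', h1, ?_⟩
      convert h2 using 3
      ring

/-! ### Segments meeting a set of positive measure -/

/-- If `S` fills a proportion `θ` of the convex set `Q` and `p0 ∈ Q`, then a segment from `p0`
meets `S` in a proportion at least `θ² / (4d)` of its length. The homotheties with centre `p0` and
ratio in `[1 - θ / (2d), 1]` lose at most half of `S`, so the claim follows by averaging. -/
lemma exists_segment {V : Type*} [NormedAddCommGroup V] [NormedSpace ℝ V] [MeasurableSpace V]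
    [BorelSpace V] [FiniteDimensional ℝ V] (μ : Measure V) [μ.IsAddHaarMeasure]
    (hdim : 1 ≤ Module.finrank ℝ V) {Q S : Set V} (hQ : Convex ℝ Q)
    (hQ0 : μ Q ≠ 0) (hQt : μ Q ≠ ⊤) {p0 : V} (hp0 : p0 ∈ Q) (hS : MeasurableSet S) (hSQ : S ⊆ Q)
    {θ : ℝ} (hθ : 0 < θ) (hθ1 : θ ≤ 1) (hθS : ENNReal.ofReal θ * μ Q ≤ μ S) :
    ∃ p ∈ Q, ENNReal.ofReal (θ ^ 2 / (4 * Module.finrank ℝ V)) ≤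
      volume {τ : ℝ | τ ∈ Ioc (0 : ℝ) 1 ∧ p0 + τ • (p - p0) ∈ S} := by
  set d := Module.finrank ℝ V with hd
  have hd1 : (1 : ℝ) ≤ d := by exact_mod_cast hdim
  set T : Set ℝ := Icc (1 - θ / (2 * d)) 1 with hT
  have hθd : θ / (2 * d) ≤ 1 / 2 := by
    rw [div_le_div_iff₀ (by positivity) (by norm_num)]; nlinarith
  have hθd0 : 0 < θ / (2 * d) := by positivity
  let φ : V × ℝ → V := fun q => p0 + q.2 • (q.1 - p0)
  have hφ : Continuous φ := by fun_prop
  have hZ : MeasurableSet (φ ⁻¹' S) := hφ.measurable hS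
  have hQn : NullMeasurableSet Q μ := hQ.nullMeasurableSet μ
  have hslice : ∀ τ ∈ T, ENNReal.ofReal (θ / 2) * μ Q ≤
      (μ.restrict Q) ((fun p => (p, τ)) ⁻¹' (φ ⁻¹' S)) := by
    intro τ hτ
    have hτ0 : 0 < τ := by linarith [hτ.1]
    set H : V → V := fun p => p0 + τ • (p - p0) with hH
    have hHeq : H = AffineMap.homothety p0 τ := by
      ext p; simp [hH, AffineMap.homothety_apply, add_comm]
    have hHc : Continuous H := by fun_prop
    change _ ≤ (μ.restrict Q) (H ⁻¹' S)
    rw [Measure.restrict_apply (hHc.measurable hS)]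
    have himg : ∀ X : Set V, μ (H '' X) = ENNReal.ofReal (τ ^ d) * μ X := by
      intro X
      rw [hHeq, Measure.addHaar_image_homothety, abs_of_nonneg (by positivity)]
    have hHQ : H '' Q ⊆ Q := by
      rintro _ ⟨p, hp, rfl⟩
      exact hQ.add_smul_sub_mem hp0 hp ⟨hτ0.le, hτ.2⟩
    have hHQn : NullMeasurableSet (H '' Q) μ := by
      refine Convex.nullMeasurableSet μ ?_
      rw [hHeq]
      exact hQ.affine_image _
    have hτd : 1 - θ / 2 ≤ τ ^ d := by
      have := one_add_mul_le_pow (a := τ - 1) (by linarith) d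
      rw [add_sub_cancel] at this
      refine le_trans ?_ this
      have h1 : -(θ / (2 * d)) ≤ τ - 1 := by linarith [hτ.1]
      have h2 : (d : ℝ) * -(θ / (2 * d)) ≤ d * (τ - 1) := by gcongr
      have h3 : (d : ℝ) * -(θ / (2 * d)) = -(θ / 2) := by field_simp
      linarith
    have hτd1 : τ ^ d ≤ 1 := pow_le_one₀ hτ0.le hτ.2
    have hSle : μ S ≤ μ (H ⁻¹' S ∩ Q) + μ (Q \ H '' Q) := by
      have hsub : S ⊆ H '' (H ⁻¹' S ∩ Q) ∪ (Q \ H '' Q) := by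
        intro y hy
        by_cases h : y ∈ H '' Q
        · obtain ⟨p, hp, rfl⟩ := h
          exact Or.inl ⟨p, ⟨hy, hp⟩, rfl⟩
        · exact Or.inr ⟨hSQ hy, h⟩
      refine (measure_mono hsub).trans ((measure_union_le _ _).trans ?_)
      refine add_le_add ?_ le_rfl
      rw [himg]
      refine mul_le_of_le_one_left (zero_le) ?_
      rw [ENNReal.ofReal_le_one]
      exact hτd1
    have hdiff : μ (Q \ H '' Q) ≤ ENNReal.ofReal (θ / 2) * μ Q := by
      rw [measure_sdiff hHQ hHQn (ne_top_of_le_ne_top hQt (measure_mono hHQ)), himg,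
        tsub_le_iff_right, ← add_mul, ← ENNReal.ofReal_add (by positivity) (by positivity)]
      refine le_mul_of_one_le_left (zero_le) ?_
      rw [ENNReal.one_le_ofReal]
      linarith
    have hfin : ENNReal.ofReal (θ / 2) * μ Q ≠ ⊤ := ENNReal.mul_ne_top ENNReal.ofReal_ne_top hQt
    have : ENNReal.ofReal (θ / 2) * μ Q + ENNReal.ofReal (θ / 2) * μ Q ≤
        μ (H ⁻¹' S ∩ Q) + ENNReal.ofReal (θ / 2) * μ Q := by
      calc _ = ENNReal.ofReal θ * μ Q := by
            rw [← add_mul, ← ENNReal.ofReal_add (by positivity) (by positivity), add_halves]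
        _ ≤ μ S := hθS
        _ ≤ _ := hSle.trans (by gcongr)
    exact (ENNReal.add_le_add_iff_right hfin).1 this
  have hprod : ENNReal.ofReal (θ ^ 2 / (4 * d)) * μ Q ≤
      ∫⁻ p in Q, (volume.restrict T) (Prod.mk p ⁻¹' (φ ⁻¹' S)) ∂μ := by
    have : SigmaFinite (μ.restrict Q) := inferInstance
    rw [← Measure.prod_apply hZ, Measure.prod_apply_symm hZ]
    calc ENNReal.ofReal (θ ^ 2 / (4 * d)) * μ Q
        = ∫⁻ _ in T, ENNReal.ofReal (θ / 2) * μ Q := by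
          rw [setLIntegral_const, hT, Real.volume_Icc, mul_right_comm,
            ← ENNReal.ofReal_mul (by positivity)]
          congr 2
          field_simp
          ring
      _ ≤ _ := setLIntegral_mono' measurableSet_Icc hslice
  have hint : ∫⁻ p in Q, (volume.restrict T) (Prod.mk p ⁻¹' (φ ⁻¹' S)) ∂μ ≠ ⊤ := by
    have hle : ∫⁻ p in Q, (volume.restrict T) (Prod.mk p ⁻¹' (φ ⁻¹' S)) ∂μ ≤
        ∫⁻ _ in Q, volume T ∂μ := by
      refine lintegral_mono fun p => ?_
      exact (measure_mono (subset_univ _)).trans (by rw [Measure.restrict_apply_univ])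
    refine ne_top_of_le_ne_top ?_ hle
    rw [setLIntegral_const, hT, Real.volume_Icc]
    exact ENNReal.mul_ne_top ENNReal.ofReal_ne_top hQt
  obtain ⟨p, hp, hpv⟩ := exists_setLAverage_le hQ0 hQn hint
  refine ⟨p, hp, ?_⟩
  have h1 : ENNReal.ofReal (θ ^ 2 / (4 * d)) ≤
      (volume.restrict T) (Prod.mk p ⁻¹' (φ ⁻¹' S)) := by
    refine le_trans ?_ hpv
    rw [setLAverage_eq, ENNReal.le_div_iff_mul_le (Or.inl hQ0) (Or.inl hQt)]
    exact hprod
  refine h1.trans ?_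
  have hmeas : MeasurableSet (Prod.mk p ⁻¹' (φ ⁻¹' S)) := measurable_prodMk_left hZ
  rw [Measure.restrict_apply hmeas]
  refine measure_mono ?_
  rintro τ ⟨h2, h3⟩
  exact ⟨⟨by linarith [h3.1], h3.2⟩, h2⟩

/-! ### Slabs, constants and `L²` bounds -/

/-- The slab of the cylinder over the interval `[a, b]`. -/
def slab (n : ℕ) (a b : ℝ) : Set (Sp n) :=
  (Icc a b ∩ Ioo (-1 : ℝ) 1) ×ˢ ball (0 : EuclideanSpace ℝ (Fin n)) 1

lemma slab_subset {a b : ℝ} : slab n a b ⊆ Cyl n := prod_mono inter_subset_right le_rfl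

lemma measurableSet_slab {a b : ℝ} : MeasurableSet (slab n a b) :=
  (measurableSet_Icc.inter measurableSet_Ioo).prod measurableSet_ball

lemma convex_slab {a b : ℝ} : Convex ℝ (slab n a b) :=
  ((convex_Icc _ _).inter (convex_Ioo _ _)).prod (convex_ball _ _)

/-- The Lebesgue measure of the unit ball of `ℝⁿ`. -/
def V1 (n : ℕ) : ℝ := (volume (ball (0 : EuclideanSpace ℝ (Fin n)) 1)).toReal

lemma ofReal_V1 : ENNReal.ofReal (V1 n) = volume (ball (0 : EuclideanSpace ℝ (Fin n)) 1) :=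
  ENNReal.ofReal_toReal measure_ball_lt_top.ne

lemma V1_pos : 0 < V1 n :=
  ENNReal.toReal_pos (measure_ball_pos _ _ one_pos).ne' measure_ball_lt_top.ne

lemma volume_Cyl : volume (Cyl n) = ENNReal.ofReal (2 * V1 n) := by
  rw [Cyl, Measure.volume_eq_prod, Measure.prod_prod, Real.volume_Ioo, ← ofReal_V1,
    ← ENNReal.ofReal_mul (by norm_num)]
  norm_num

lemma volume_slab_le {a b : ℝ} (hab : a ≤ b) :
    volume (slab n a b) ≤ ENNReal.ofReal ((b - a) * V1 n) := by
  rw [slab, Measure.volume_eq_prod, Measure.prod_prod, ENNReal.ofReal_mul (by linarith),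
    ofReal_V1, ← Real.volume_Icc]
  gcongr
  exact inter_subset_left

/-- One of the `J` slabs of width `2 / J` captures its share of `E`. -/
lemma exists_slab {E : Set (Sp n)} (hE : E ⊆ Cyl n) {J : ℕ} (hJ : 1 ≤ J) {M : ℝ}
    (hM : ENNReal.ofReal M ≤ volume E) :
    ∃ j < J, ENNReal.ofReal (M / J) ≤
      volume (E ∩ slab n (-1 + 2 * j / J) (-1 + 2 * (j + 1) / J)) := by
  have hJ0 : (0 : ℝ) < J := by exact_mod_cast hJ
  obtain ⟨j, hj, hmax⟩ := Finset.exists_max_image (Finset.range J)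
    (fun j : ℕ => volume (E ∩ slab n (-1 + 2 * j / J) (-1 + 2 * (j + 1) / J)))
    ⟨0, Finset.mem_range.2 hJ⟩
  refine ⟨j, Finset.mem_range.1 hj, ?_⟩
  have hcover : E ⊆ ⋃ i ∈ Finset.range J,
      E ∩ slab n (-1 + 2 * (i : ℝ) / J) (-1 + 2 * ((i : ℝ) + 1) / J) := by
    intro p hp
    have hpC := hE hp
    obtain ⟨⟨h1, h2⟩, h3⟩ := hpC
    have h0 : 0 ≤ (p.1 + 1) * J / 2 := by
      have : 0 ≤ p.1 + 1 := by linarith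
      positivity
    have hfl := Nat.floor_le h0
    have hfl2 := Nat.lt_floor_add_one ((p.1 + 1) * J / 2)
    simp only [mem_iUnion, Finset.mem_range]
    refine ⟨⌊(p.1 + 1) * J / 2⌋₊, ?_, hp, ⟨⟨?_, ?_⟩, h1, h2⟩, h3⟩
    · rw [Nat.floor_lt h0]
      nlinarith
    · have : 2 * (⌊(p.1 + 1) * J / 2⌋₊ : ℝ) / J ≤ p.1 + 1 := by
        rw [div_le_iff₀ hJ0]; linarith
      linarith
    · have : p.1 + 1 ≤ 2 * ((⌊(p.1 + 1) * J / 2⌋₊ : ℝ) + 1) / J := by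
        rw [le_div_iff₀ hJ0]; linarith
      linarith
  have hle : ENNReal.ofReal M ≤
      J * volume (E ∩ slab n (-1 + 2 * j / J) (-1 + 2 * (j + 1) / J)) := by
    refine hM.trans ((measure_mono hcover).trans ((measure_biUnion_finset_le _ _).trans ?_))
    refine (Finset.sum_le_card_nsmul _ _ _ hmax).trans ?_
    rw [Finset.card_range, nsmul_eq_mul]
  rw [ENNReal.ofReal_div_of_pos hJ0, ENNReal.ofReal_natCast]
  refine ENNReal.div_le_of_le_mul' ?_
  exact hle

/-- The lower bound on the supremum is attained up to a factor `e`. -/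
lemma exists_large {f : ℝ → EuclideanSpace ℝ (Fin n) → ℂ} {t : ℝ} (ht : 0 < t)
    (h : ENNReal.ofReal t ≤ eLpNorm (fun p : Sp n => f p.1 p.2) ⊤ (volume.restrict (Cyl n))) :
    ∃ p ∈ Cyl n, Real.exp (-(1 - Real.log t)) ≤ ‖f p.1 p.2‖ := by
  by_contra hcon
  push Not at hcon
  have h1 : eLpNorm (fun p : Sp n => f p.1 p.2) ⊤ (volume.restrict (Cyl n)) ≤
      ENNReal.ofReal (Real.exp (-(1 - Real.log t))) := by
    rw [eLpNorm_exponent_top]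
    refine eLpNormEssSup_le_of_ae_bound ?_
    filter_upwards [ae_restrict_mem isOpen_Cyl.measurableSet] with p hp using (hcon p hp).le
  have h2 := h.trans h1
  rw [ENNReal.ofReal_le_ofReal_iff (Real.exp_pos _).le] at h2
  have h3 : Real.exp (-(1 - Real.log t)) = t * Real.exp (-1) := by
    rw [show -(1 - Real.log t) = Real.log t + -1 by ring, Real.exp_add, Real.exp_log ht]
  have h4 : Real.exp (-1) < 1 := by rw [Real.exp_lt_one_iff]; norm_num
  nlinarith

/-- Let `Q` be a convex part of the cylinder of width at most `1 / (8A)` in `u`, containing a point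
`p0` with `‖f p0‖ ≥ exp (-Λ0)`. If `E ∩ Q` has measure at least `2γm`, then `‖f‖ ≥ ε` on a part of
it of measure at least `γm`: otherwise `{‖f‖ < ε} ∩ E ∩ Q` would have measure at least `γm`, a
segment from `p0` would meet it in a proportion at least `γ² / (16 (n + 1))`, and the Remez-type
inequality on this segment would contradict the choice of `ε`. -/
lemma good_part (hn : 1 ≤ n) {f : ℝ → EuclideanSpace ℝ (Fin n) → ℂ}
    (hF : ContDiffOn ℝ (⊤ : ℕ∞) (fun p : Sp n => f p.1 p.2) (Cyl n)) {A B s : ℝ} (hs0 : 0 < s)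
    (hs1 : s < 1) (hA : 1 ≤ A) (hB : 1 ≤ B) (hf : GevreyBound f A B s)
    {Q E : Set (Sp n)} (hQ : Convex ℝ Q) (hQm : MeasurableSet Q) (hQC : Q ⊆ Cyl n)
    (hwidth : ∀ p ∈ Q, ∀ q ∈ Q, |p.1 - q.1| * A ≤ 1 / 8) (hE : MeasurableSet E)
    {m γ : ℝ} (hm : 0 < m) (hγ : 0 < γ) (hγ1 : γ ≤ 1)
    (hQv : volume Q ≤ ENNReal.ofReal (2 * m))
    (hEQ : ENNReal.ofReal (2 * γ * m) ≤ volume (E ∩ Q)) {p0 : Sp n} (hp0 : p0 ∈ Q) {Λ0 : ℝ}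
    (hΛ0 : 0 ≤ Λ0) (hval : Real.exp (-Λ0) ≤ ‖f p0.1 p0.2‖) {ε : ℝ}
    (hε : ε < (γ ^ 2 / (16 * (n + 1)) / 12) ^ (3 + 2 * ((1 - s) * (16 * n) ^ (1 / (1 - s)) *
      B ^ (1 / (1 - s)) + Λ0) : ℝ)) :
    ENNReal.ofReal (γ * m) ≤ volume ({p | ε ≤ ‖f p.1 p.2‖} ∩ (E ∩ Q)) := by
  have hn' : (1 : ℝ) ≤ n := by exact_mod_cast hn
  have h1s : 0 < 1 - s := by linarith
  have hcont : ContinuousOn (fun p : Sp n => ‖f p.1 p.2‖) (E ∩ Q) :=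
    (hF.continuousOn.mono (inter_subset_right.trans hQC)).norm
  have hEQm : MeasurableSet (E ∩ Q) := hE.inter hQm
  obtain ⟨U, hU, hUeq⟩ := continuousOn_iff'.1 hcont (Iio ε) isOpen_Iio
  set S : Set (Sp n) := (fun p : Sp n => ‖f p.1 p.2‖) ⁻¹' Iio ε ∩ (E ∩ Q) with hS
  have hSm : MeasurableSet S := by rw [hUeq]; exact hU.measurableSet.inter hEQm
  have hSQ : S ⊆ Q := fun p hp => hp.2.2
  have hSG : volume (E ∩ Q) ≤ volume S + volume ({p | ε ≤ ‖f p.1 p.2‖} ∩ (E ∩ Q)) := by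
    refine (measure_mono ?_).trans (measure_union_le _ _)
    intro p hp
    rcases lt_or_ge ‖f p.1 p.2‖ ε with h | h
    · exact Or.inl ⟨h, hp⟩
    · exact Or.inr ⟨h, hp⟩
  by_contra hcon
  push Not at hcon
  have hSv : ENNReal.ofReal (γ * m) ≤ volume S := by
    by_contra hcon2
    push Not at hcon2
    have : ENNReal.ofReal (2 * γ * m) < ENNReal.ofReal (γ * m) + ENNReal.ofReal (γ * m) :=
      (hEQ.trans hSG).trans_lt (ENNReal.add_lt_add hcon2 hcon)
    rw [← ENNReal.ofReal_add (by positivity) (by positivity)] at this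
    exact this.ne (by congr 1; ring)
  have hQt : volume Q ≠ ⊤ := ne_top_of_le_ne_top ENNReal.ofReal_ne_top hQv
  have hQ0 : volume Q ≠ 0 := by
    intro h0
    have : volume S = 0 := measure_mono_null hSQ h0
    rw [this] at hSv
    have : 0 < ENNReal.ofReal (γ * m) := ENNReal.ofReal_pos.2 (by positivity)
    exact absurd hSv this.not_ge
  have hfr : Module.finrank ℝ (Sp n) = n + 1 := by
    rw [Module.finrank_prod, Module.finrank_self, finrank_euclideanSpace_fin, add_comm]
  have hθS : ENNReal.ofReal (γ / 2) * volume Q ≤ volume S := by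
    refine le_trans ?_ hSv
    calc _ ≤ ENNReal.ofReal (γ / 2) * ENNReal.ofReal (2 * m) := by gcongr
      _ = _ := by rw [← ENNReal.ofReal_mul (by positivity)]; congr 1; ring
  have hHaar : (volume : Measure (Sp n)).IsAddHaarMeasure := by
    rw [Measure.volume_eq_prod]; infer_instance
  obtain ⟨p, hp, hpv⟩ := exists_segment (volume : Measure (Sp n)) (by rw [hfr]; omega) hQ hQ0 hQt
    hp0 hSm hSQ (θ := γ / 2) (by positivity) (by linarith) hθS
  have hδ : (γ / 2) ^ 2 / (4 * (Module.finrank ℝ (Sp n) : ℝ)) = γ ^ 2 / (16 * (n + 1)) := by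
    rw [hfr]; push_cast; field_simp; ring
  rw [hδ] at hpv
  set c := (1 - s) * (16 * n : ℝ) ^ (1 / (1 - s)) * B ^ (1 / (1 - s)) with hc
  have hc0 : 0 ≤ c := by positivity
  have hrem := remez_segment (F := fun p : Sp n => f p.1 p.2) isOpen_Cyl hF p0 (p - p0)
    (fun τ hτ => hQC (hQ.add_smul_sub_mem hp0 hp hτ)) _ (fun τ hτ => hτ.1)
    (γ ^ 2 / (16 * (n + 1))) (by positivity)
    (by rw [div_le_one (by positivity)]; nlinarith) hpv ε (fun τ hτ => (le_of_lt hτ.2.1))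
    (Real.exp c) (Real.exp (-Λ0)) (Real.one_le_exp hc0) (Real.exp_pos _)
    (Real.exp_le_exp.2 (by linarith)) hval
    (fun k q hq => by
      refine (dirD_bound hF hs1 (l := 16 * n) (by positivity) hA hB hf _ k hq).trans ?_
      rw [mul_assoc]
      have h1 := hwidth p hp p0 hp0
      have h2 : ∑ i, |(p - p0).2 i| ≤ n * 2 := by
        have hb : ‖(p - p0).2‖ ≤ 2 := by
          have e1 := (hQC hp).2
          have e2 := (hQC hp0).2
          rw [mem_ball_zero_iff] at e1 e2
          exact (norm_sub_le _ _).trans (by linarith)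
        calc ∑ i, |(p - p0).2 i| ≤ ∑ _i : Fin n, (2 : ℝ) :=
              Finset.sum_le_sum fun i _ => (PiLp.norm_apply_le (p - p0).2 i).trans hb
          _ = n * 2 := by simp
      have h3 : |(p - p0).1| * A + (∑ i, |(p - p0).2 i|) * (1 / (16 * n)) ≤ 1 / 4 := by
        have : (∑ i, |(p - p0).2 i|) * (1 / (16 * n)) ≤ n * 2 * (1 / (16 * n)) := by gcongr
        have h4 : (n : ℝ) * 2 * (1 / (16 * n)) = 1 / 8 := by field_simp; norm_num
        have h5 : |(p - p0).1| * A ≤ 1 / 8 := h1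
        linarith
      gcongr)
  rw [← Real.exp_sub, Real.log_exp, sub_neg_eq_add] at hrem
  linarith

/-- Comparison of the constants. Here `d = n + 1`, `b = B^(1/(1-s))` and `X = 1 - log t`, and every
factor is estimated by a power of `y = 192 d / γ`. -/
lemma numerics {d c A b X γ J : ℝ} (hd : 1 ≤ d) (hc : 0 ≤ c) (hA : 1 ≤ A) (hb : 0 ≤ b)
    (hX : 1 ≤ X) (hγ : 0 < γ) (hγ1 : γ ≤ 1) (hJ0 : 0 < J) (hJ : J ≤ 17 * A) :
    2 * J / γ ≤ ((192 * d + 204 + 8 * c) / γ) ^ ((192 * d + 204 + 8 * c) *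
        (X * Real.exp ((192 * d + 204 + 8 * c) * A) + b)) *
      ((γ ^ 2 / (16 * d) / 12) ^ (4 + 2 * (c * b + (8 ^ (4 * J) * (X + 3) - 3)))) ^ 2 := by
  set K := 192 * d + 204 + 8 * c with hK
  set P := 4 + 2 * (c * b + (8 ^ (4 * J) * (X + 3) - 3)) with hP
  set y := 192 * d / γ with hy
  have hd0 : 0 < d := by linarith
  have hy192 : 192 ≤ y := by rw [hy, le_div_iff₀ hγ]; nlinarith
  have hy1 : 1 ≤ y := by linarith
  have hy0 : 0 < y := by linarith
  set W := Real.exp (204 * A) with hW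
  have h8 : (8 : ℝ) ^ (4 * J) ≤ W := by
    have : Real.log 8 ≤ 3 := by
      have := Real.log_two_lt_d9
      rw [show (8 : ℝ) = 2 ^ 3 by norm_num, Real.log_pow]
      push_cast; linarith
    rw [Real.rpow_def_of_pos (by norm_num), hW]
    refine Real.exp_le_exp.2 ?_
    nlinarith
  have hAW : 1 + A ≤ W := by
    have := Real.add_one_le_exp (204 * A)
    linarith
  have h80 : (1 : ℝ) ≤ 8 ^ (4 * J) := Real.one_le_rpow (by norm_num) (by positivity)
  have hcb : 0 ≤ c * b := by positivity
  have hP0 : 0 ≤ P := by nlinarith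
  have hPle : P ≤ 2 * (c * b) + 8 * W * X := by nlinarith
  -- `γ² / (192 d) ≥ y⁻²`
  have hbase : y⁻¹ ^ 2 ≤ γ ^ 2 / (16 * d) / 12 := by
    rw [hy, inv_div, div_pow, div_div]
    gcongr
    nlinarith
  have hε : y ^ (-(4 * P)) ≤ ((γ ^ 2 / (16 * d) / 12) ^ P) ^ 2 := by
    have h1 : (y⁻¹ ^ 2) ^ P ≤ (γ ^ 2 / (16 * d) / 12) ^ P :=
      Real.rpow_le_rpow (by positivity) hbase hP0
    have h2 : ((y⁻¹ ^ 2) ^ P) ^ 2 = y ^ (-(4 * P)) := by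
      rw [← Real.rpow_natCast y⁻¹, ← Real.rpow_mul (by positivity), ← Real.rpow_natCast,
        ← Real.rpow_mul (by positivity), Real.inv_rpow hy0.le, ← Real.rpow_neg hy0.le]
      congr 1; push_cast; ring
    rw [← h2]
    gcongr
  have hJy : 2 * J / γ ≤ y ^ (2 * W * X) := by
    calc 2 * J / γ ≤ y * A := by
          rw [hy, div_mul_eq_mul_div]
          refine div_le_div_of_nonneg_right ?_ hγ.le
          nlinarith
      _ ≤ y * y ^ A := by
          gcongr
          have h1 : A ≤ Real.exp A := by linarith [Real.add_one_le_exp A]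
          refine h1.trans ?_
          rw [← Real.exp_one_rpow]
          exact Real.rpow_le_rpow (Real.exp_pos _).le
            (by linarith [Real.exp_one_lt_d9]) (by linarith)
      _ = y ^ (1 + A) := by rw [Real.rpow_add hy0, Real.rpow_one]
      _ ≤ _ := Real.rpow_le_rpow_of_exponent_le hy1 (by nlinarith)
  have hexp : 2 * W * X + 4 * P ≤ K * (X * Real.exp (K * A) + b) := by
    have hWK : W ≤ Real.exp (K * A) := by
      rw [hW]
      refine Real.exp_le_exp.2 ?_
      have : 204 ≤ K := by rw [hK]; nlinarith
      gcongr
    have hW0 : 0 < W := Real.exp_pos _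
    have h1 : W * X ≤ X * Real.exp (K * A) := by rw [mul_comm]; gcongr
    have h2 : 34 * (W * X) ≤ K * (X * Real.exp (K * A)) := by
      have : 34 ≤ K := by rw [hK]; nlinarith
      gcongr
    have h3 : 8 * (c * b) ≤ K * b := by
      rw [← mul_assoc]
      gcongr
      rw [hK]; nlinarith
    nlinarith
  have hyK : y ≤ K / γ := by
    rw [hy]
    gcongr
    rw [hK]; nlinarith
  have hmain : y ^ (2 * W * X + 4 * P) ≤ (K / γ) ^ (K * (X * Real.exp (K * A) + b)) := by
    refine (Real.rpow_le_rpow_of_exponent_le hy1 hexp).trans ?_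
    have : 0 ≤ 2 * W * X := by positivity
    exact Real.rpow_le_rpow hy0.le hyK (by linarith)
  calc 2 * J / γ ≤ y ^ (2 * W * X) := hJy
    _ = y ^ (2 * W * X + 4 * P) * y ^ (-(4 * P)) := by
        rw [← Real.rpow_add hy0]; congr 1; ring
    _ ≤ _ := by gcongr

lemma eLpNorm_le_Cyl {f : ℝ → EuclideanSpace ℝ (Fin n) → ℂ}
    (h1 : ∀ p ∈ Cyl n, ‖f p.1 p.2‖ ≤ 1) :
    eLpNorm (fun p : Sp n => f p.1 p.2) 2 (volume.restrict (Cyl n)) ≤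
      ENNReal.ofReal (Real.sqrt (2 * V1 n)) := by
  have h := eLpNorm_le_of_ae_bound (p := 2) (μ := volume.restrict (Cyl n))
    (f := fun p : Sp n => f p.1 p.2) (C := 1) (by
      filter_upwards [ae_restrict_mem isOpen_Cyl.measurableSet] with p hp using h1 p hp)
  refine h.trans ?_
  rw [Measure.restrict_apply_univ, volume_Cyl, ENNReal.ofReal_one, mul_one,
    ENNReal.ofReal_rpow_of_pos (by have := V1_pos (n := n); positivity), Real.sqrt_eq_rpow]
  norm_num

lemma eLpNorm_ge {f : ℝ → EuclideanSpace ℝ (Fin n) → ℂ} {G E : Set (Sp n)} (hGE : G ⊆ E)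
    (hG : MeasurableSet G) {ε m : ℝ} (hε : 0 ≤ ε) (hm : 0 < m) (hGf : ∀ p ∈ G, ε ≤ ‖f p.1 p.2‖)
    (hGm : ENNReal.ofReal m ≤ volume G) :
    ENNReal.ofReal (ε * Real.sqrt m) ≤
      eLpNorm (fun p : Sp n => f p.1 p.2) 2 (volume.restrict E) := by
  refine le_trans ?_ (eLpNorm_mono_measure _ (Measure.restrict_mono hGE le_rfl))
  have h1 : eLpNorm (fun _ : Sp n => ε) 2 (volume.restrict G) ≤
      eLpNorm (fun p : Sp n => f p.1 p.2) 2 (volume.restrict G) := by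
    refine eLpNorm_mono_ae ?_
    filter_upwards [ae_restrict_mem hG] with p hp
    rw [Real.norm_of_nonneg hε]
    exact hGf p hp
  refine le_trans ?_ h1
  rw [eLpNorm_const' _ (by norm_num) (by norm_num), Measure.restrict_apply_univ,
    Real.enorm_of_nonneg hε, ENNReal.ofReal_mul hε, Real.sqrt_eq_rpow,
    ← ENNReal.ofReal_rpow_of_pos hm]
  rw [ENNReal.toReal_ofNat]
  exact mul_le_mul_right (ENNReal.rpow_le_rpow hGm (by norm_num)) _

end UCC

/-- Proposition 2.9 / Proposition 6.2: quantitative unique continuation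
estimate on the cylinder `(-1,1) × B(0,1) ⊂ ℝ^{n+1}` for smooth functions with Gevrey-type
bounds, from a measurable subset `E` of measure at least `2γV₁`. -/
theorem unique_continuation_cylinder (n : ℕ) (hn : 1 ≤ n) (s : ℝ) (hs0 : 0 < s) (hs1 : s < 1) :
    ∃ K ≥ (1:ℝ), ∀ A B : ℝ, 1 ≤ A → 1 ≤ B →
    ∀ t : ℝ, 0 < t → t ≤ 1 → ∀ γ ∈ Set.Ioc (0:ℝ) 1,
    ∀ E : Set (ℝ × EuclideanSpace ℝ (Fin n)), MeasurableSet E →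
    E ⊆ Set.Ioo (-1:ℝ) 1 ×ˢ ball (0 : EuclideanSpace ℝ (Fin n)) 1 →
    ENNReal.ofReal (2 * γ * (volume (ball (0 : EuclideanSpace ℝ (Fin n)) 1)).toReal)
      ≤ volume E →
    ∀ f : ℝ → EuclideanSpace ℝ (Fin n) → ℂ,
    ContDiffOn ℝ (⊤ : ℕ∞) (fun p : ℝ × EuclideanSpace ℝ (Fin n) => f p.1 p.2)
      (Set.Ioo (-1:ℝ) 1 ×ˢ ball (0 : EuclideanSpace ℝ (Fin n)) 1) →
    ENNReal.ofReal t ≤ eLpNorm (fun p : ℝ × EuclideanSpace ℝ (Fin n) => f p.1 p.2) ⊤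
      (volume.restrict (Set.Ioo (-1:ℝ) 1 ×ˢ ball (0 : EuclideanSpace ℝ (Fin n)) 1)) →
    (∀ (m : ℕ) (α : Fin n → ℕ), ∀ u ∈ Set.Ioo (-1:ℝ) 1,
      ∀ x ∈ ball (0 : EuclideanSpace ℝ (Fin n)) 1,
        ‖mixDeriv m α f u x‖ ≤
          A ^ m * B ^ (∑ i, α i) * (Nat.factorial m : ℝ) *
            (Nat.factorial (∑ i, α i) : ℝ) ^ s) →
    ((eLpNorm (fun p : ℝ × EuclideanSpace ℝ (Fin n) => f p.1 p.2) 2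
        (volume.restrict (Set.Ioo (-1:ℝ) 1 ×ˢ ball (0 : EuclideanSpace ℝ (Fin n)) 1))).toReal) ^ 2
      ≤ (K / γ) ^ (K * ((1 - Real.log t) * Real.exp (K * A) + B ^ (1 / (1 - s)))) *
        ((eLpNorm (fun p : ℝ × EuclideanSpace ℝ (Fin n) => f p.1 p.2) 2
          (volume.restrict E)).toReal) ^ 2 := by
  have hn1 : (1 : ℝ) ≤ n := by exact_mod_cast hn
  have h1s : 0 < 1 - s := by linarith
  set c := (1 - s) * (16 * n : ℝ) ^ (1 / (1 - s)) with hc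
  have hc0 : 0 ≤ c := by positivity
  refine ⟨192 * (n + 1 : ℝ) + 204 + 8 * c, by nlinarith, ?_⟩
  intro A B hA hB t ht ht1 γ hγ E hEm hE hEv f hF hft hf
  obtain ⟨hγ0, hγ1⟩ := hγ
  change E ⊆ UCC.Cyl n at hE
  change ENNReal.ofReal (2 * γ * UCC.V1 n) ≤ volume E at hEv
  change ContDiffOn ℝ (⊤ : ℕ∞) (fun p : UCC.Sp n => f p.1 p.2) (UCC.Cyl n) at hF
  change UCC.GevreyBound f A B s at hf
  have hV := UCC.V1_pos (n := n)
  obtain ⟨⟨u0, x0⟩, hp, hval⟩ := UCC.exists_large ht hft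
  have hX : 1 ≤ 1 - Real.log t := by linarith [Real.log_nonpos ht.le ht1]
  set X := 1 - Real.log t with hXdef
  -- slabs of width `2 / J` with `16 A ≤ J ≤ 17 A`
  set J := ⌈16 * A⌉₊ with hJdef
  have hJ16 : 16 * A ≤ J := Nat.le_ceil _
  have hJ17 : (J : ℝ) ≤ 17 * A := by
    have := (Nat.ceil_lt_add_one (a := 16 * A) (by linarith)).le
    linarith
  have hJ0 : (0 : ℝ) < J := by linarith
  have hJ1 : 1 ≤ J := by exact_mod_cast hJ0
  obtain ⟨j, hjJ, hjv⟩ := UCC.exists_slab hE hJ1 hEv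
  set a : ℝ := -1 + 2 * j / J with ha
  set b : ℝ := -1 + 2 * (j + 1) / J with hb
  have hab : b - a = 2 / J := by rw [ha, hb]; field_simp; ring
  have hjJ' : (j : ℝ) + 1 ≤ J := by exact_mod_cast hjJ
  have ha1 : -1 ≤ a := by
    have : (0 : ℝ) ≤ 2 * j / J := by positivity
    linarith
  have hb1 : b ≤ 1 := by
    have : 2 * ((j : ℝ) + 1) / J ≤ 2 := by rw [div_le_iff₀ hJ0]; linarith
    linarith
  have hr0 : (0 : ℝ) < 1 / J := by positivity
  have h2J : (2 : ℝ) / J = 2 * (1 / J) := by ring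
  have hrA : 1 / (J : ℝ) * A ≤ 1 / 16 := by
    rw [div_mul_eq_mul_div, div_le_iff₀ hJ0]; linarith
  -- transport of the lower bound at `(u0, x0)` into the slab
  have hcI : a + 1 / J ∈ Ioo (-1 : ℝ) 1 := ⟨by linarith, by linarith⟩
  have hdist : |u0 - (a + 1 / J)| ≤ 1 / (J : ℝ) + (4 * J : ℕ) * (1 / (J : ℝ) / 2) := by
    have h4 : ((4 * J : ℕ) : ℝ) * (1 / (J : ℝ) / 2) = 2 := by push_cast; field_simp; norm_num
    rw [h4, abs_le]
    have h5 := hp.1.1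
    have h6 := hp.1.2
    simp only at h5 h6
    exact ⟨by linarith [hcI.2], by linarith [hcI.1]⟩
  obtain ⟨u', hu', hu'd, hu'v⟩ := UCC.chain hF hs0 hs1 hA hB hf hp.2 hr0 (by linarith) hcI (4 * J)
    u0 hp.1 hdist X (by linarith) hval
  have hpow : (8 : ℝ) ^ (4 * J : ℕ) = 8 ^ (4 * (J : ℝ)) := by
    rw [← Real.rpow_natCast]; push_cast; rfl
  rw [hpow] at hu'v
  have h8 : (1 : ℝ) ≤ 8 ^ (4 * (J : ℝ)) := Real.one_le_rpow (by norm_num) (by positivity)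
  have hp0 : ((u', x0) : UCC.Sp n) ∈ UCC.slab n a b := by
    rw [abs_le] at hu'd
    exact ⟨⟨⟨by linarith [hu'd.1], by linarith [hu'd.2]⟩, hu'⟩, hp.2⟩
  -- the part of `E` in the slab on which `f` is not small
  set 𝓑 := B ^ (1 / (1 - s)) with hBdef
  have h𝓑 : 0 ≤ 𝓑 := by positivity
  set Λ0 := 8 ^ (4 * (J : ℝ)) * (X + 3) - 3 with hΛ0
  have hΛ00 : 0 ≤ Λ0 := by nlinarith
  set δ := γ ^ 2 / (16 * (n + 1 : ℝ)) / 12 with hδ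
  have hδ0 : 0 < δ := by positivity
  have hδ1 : δ < 1 := by
    rw [hδ, div_div, div_lt_one (by positivity)]
    nlinarith
  set ε := δ ^ (4 + 2 * (c * 𝓑 + Λ0)) with hε
  have hε0 : 0 < ε := Real.rpow_pos_of_pos hδ0 _
  have hm : 0 < UCC.V1 n / J := by positivity
  have hgood := UCC.good_part hn hF hs0 hs1 hA hB hf UCC.convex_slab UCC.measurableSet_slab
    (UCC.slab_subset (a := a) (b := b))
    (fun p hp q hq => by
      have hpq : |p.1 - q.1| ≤ 2 / J := by
        have h1 := hp.1.1
        have h2 := hq.1.1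
        rw [← hab, abs_le]
        exact ⟨by linarith [h1.1, h2.2], by linarith [h1.2, h2.1]⟩
      calc |p.1 - q.1| * A ≤ 2 / J * A := by gcongr
        _ ≤ 1 / 8 := by rw [h2J]; linarith)
    hEm hm hγ0 hγ1
    ((UCC.volume_slab_le (by linarith)).trans (le_of_eq (by rw [hab]; congr 1; ring)))
    (le_of_eq_of_le (by congr 1; ring) hjv) hp0 hΛ00 hu'v (ε := ε)
    (Real.rpow_lt_rpow_of_exponent_gt hδ0 hδ1 (by linarith))
  set G : Set (UCC.Sp n) := {p | ε ≤ ‖f p.1 p.2‖} ∩ (E ∩ UCC.slab n a b) with hG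
  have hGm : MeasurableSet G := by
    have hcont : ContinuousOn (fun p : UCC.Sp n => ‖f p.1 p.2‖) (E ∩ UCC.slab n a b) :=
      (hF.continuousOn.mono (inter_subset_right.trans UCC.slab_subset)).norm
    obtain ⟨U, hU, hUeq⟩ := continuousOn_iff_isClosed.1 hcont (Ici ε) isClosed_Ici
    change MeasurableSet ((fun p : UCC.Sp n => ‖f p.1 p.2‖) ⁻¹' Ici ε ∩ (E ∩ UCC.slab n a b))
    rw [hUeq]
    exact hU.measurableSet.inter (hEm.inter UCC.measurableSet_slab)
  have hup := UCC.eLpNorm_le_Cyl fun p hp => UCC.norm_le_one hF hf hp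
  have hlow := UCC.eLpNorm_ge (f := f) (E := E) (fun p hp => hp.2.1) hGm hε0.le
    (m := γ * (UCC.V1 n / J)) (by positivity) (fun p hp => hp.1) hgood
  have hfinE : eLpNorm (fun p : UCC.Sp n => f p.1 p.2) 2 (volume.restrict E) ≠ ⊤ :=
    ne_top_of_le_ne_top (ne_top_of_le_ne_top ENNReal.ofReal_ne_top hup)
      (eLpNorm_mono_measure _ (Measure.restrict_mono hE le_rfl))
  have hup2 : (eLpNorm (fun p : UCC.Sp n => f p.1 p.2) 2
      (volume.restrict (UCC.Cyl n))).toReal ^ 2 ≤ 2 * UCC.V1 n := by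
    have := ENNReal.toReal_le_of_le_ofReal (Real.sqrt_nonneg _) hup
    calc _ ≤ Real.sqrt (2 * UCC.V1 n) ^ 2 := by gcongr
      _ = _ := Real.sq_sqrt (by positivity)
  have hlow2 : ε ^ 2 * (γ * (UCC.V1 n / J)) ≤
      (eLpNorm (fun p : UCC.Sp n => f p.1 p.2) 2 (volume.restrict E)).toReal ^ 2 := by
    have := (ENNReal.ofReal_le_iff_le_toReal hfinE).1 hlow
    calc _ = (ε * Real.sqrt (γ * (UCC.V1 n / J))) ^ 2 := by
          rw [mul_pow, Real.sq_sqrt (by positivity)]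
      _ ≤ _ := by gcongr
  have hnum := UCC.numerics (d := n + 1) (c := c) (b := 𝓑) (by linarith) hc0 hA h𝓑 hX hγ0 hγ1
    hJ0 hJ17
  set Θ := ((192 * (n + 1 : ℝ) + 204 + 8 * c) / γ) ^ ((192 * (n + 1 : ℝ) + 204 + 8 * c) *
    (X * Real.exp ((192 * (n + 1 : ℝ) + 204 + 8 * c) * A) + 𝓑)) with hΘ
  have hΘ0 : 0 ≤ Θ := by positivity
  change 2 * J / γ ≤ Θ * ε ^ 2 at hnum
  refine hup2.trans ?_
  calc 2 * UCC.V1 n = 2 * J / γ * (γ * (UCC.V1 n / J)) := by field_simp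
    _ ≤ Θ * ε ^ 2 * (γ * (UCC.V1 n / J)) := by gcongr
    _ = Θ * (ε ^ 2 * (γ * (UCC.V1 n / J))) := by ring
    _ ≤ _ := by gcongr
end
end
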